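/- arXiv:1111.2961 — 7 statements merged into one kernel-verified Lean document; each statement's English description precedes it below -/
import Mathlib

section
/- Let 0<α<1 and T>0. Suppose f:[0,T]→ℝ is continuous on [0,T], continuously differentiable on (0,T] with f' integrable on (0,T), and f attains its maximum over [0,T] at a point t₀ ∈ (0,T]. Then the Caputo fractional derivative of f at t₀ is nonnegative: (D^α f)(t₀) ≥ 0. -/
open MeasureTheory Set Filter

/-- The Caputo fractional derivative of order `α` of `f` at `t`:
`(D^α f)(t) = (1/Γ(1−α)) ∫₀ᵗ (t−s)^{−α} f'(s) ds`. -/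
noncomputable def caputo (α : ℝ) (f : ℝ → ℝ) (t : ℝ) : ℝ :=
  (1 / Real.Gamma (1 - α)) * ∫ s in (0:ℝ)..t, (t - s) ^ (-α) * deriv f s

/-- if `f` is continuous on `[0,T]`, continuously differentiable on `(0,T]`
with integrable derivative, and attains its maximum over `[0,T]` at `t₀ ∈ (0,T]`,
then the Caputo derivative of order `α ∈ (0,1)` of `f` at `t₀` is nonnegative. -/
theorem caputo_nonneg_at_max (α T : ℝ) (hα : 0 < α) (hα1 : α < 1) (hT : 0 < T)
    (f : ℝ → ℝ) (hf : ContinuousOn f (Set.Icc 0 T))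
    (hf1 : ContDiffOn ℝ 1 f (Set.Ioc 0 T))
    (hfint : IntervalIntegrable (deriv f) MeasureTheory.volume 0 T)
    (t₀ : ℝ) (ht₀ : t₀ ∈ Set.Ioc 0 T)
    (hmax : ∀ t ∈ Set.Icc 0 T, f t ≤ f t₀) :
    0 ≤ caputo α f t₀ := by
  obtain ⟨h0, h1⟩ := ht₀
  unfold caputo
  refine mul_nonneg (one_div_nonneg.2 (Real.Gamma_pos_of_pos (by linarith)).le) ?_
  by_cases hI : IntervalIntegrable (fun s => (t₀ - s) ^ (-α) * deriv f s) volume 0 t₀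
  swap
  · rw [intervalIntegral.integral_undef hI]
  -- the primitive converges to the full integral
  have hc := intervalIntegral.continuousOn_primitive_interval' hI left_mem_uIcc
  have hlim : Tendsto (fun b => ∫ s in (0:ℝ)..b, (t₀ - s) ^ (-α) * deriv f s)
      (nhdsWithin t₀ (Ioo 0 t₀)) (nhds (∫ s in (0:ℝ)..t₀, (t₀ - s) ^ (-α) * deriv f s)) := by
    refine (hc t₀ right_mem_uIcc).mono_left (nhdsWithin_mono _ ?_)
    rw [uIcc_of_le h0.le]
    exact Ioo_subset_Icc_self
  -- boundary term tends to zero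
  have hd : HasDerivWithinAt f (derivWithin f (Ioc 0 T) t₀) (Ioc 0 T) t₀ :=
    (hf1.differentiableOn one_ne_zero t₀ ⟨h0, h1⟩).hasDerivWithinAt
  have hd2 : HasDerivWithinAt f (derivWithin f (Ioc 0 T) t₀) (Ioo 0 t₀) t₀ :=
    hd.mono (fun x hx => ⟨hx.1, hx.2.le.trans h1⟩)
  rw [hasDerivWithinAt_iff_tendsto_slope' (by simp)] at hd2
  have hp : Tendsto (fun b => (t₀ - b) ^ (1 - α)) (nhdsWithin t₀ (Ioo 0 t₀)) (nhds 0) := by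
    have : Continuous (fun b : ℝ => (t₀ - b) ^ (1 - α)) :=
      (continuous_const.sub continuous_id).rpow_const (fun x => Or.inr (by linarith))
    have h2 := this.tendsto t₀
    rw [sub_self, Real.zero_rpow (by linarith)] at h2
    exact h2.mono_left nhdsWithin_le_nhds
  have hz : Tendsto (fun b => (t₀ - b) ^ (-α) * (f b - f t₀))
      (nhdsWithin t₀ (Ioo 0 t₀)) (nhds 0) := by
    have h3 := (hp.mul hd2).neg
    rw [zero_mul, neg_zero] at h3
    refine h3.congr' ?_
    filter_upwards [self_mem_nhdsWithin] with b hb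
    have hb' : 0 < t₀ - b := sub_pos.2 hb.2
    have hne : b - t₀ ≠ 0 := by linarith
    rw [show (1 - α) = -α + 1 by ring, Real.rpow_add hb', Real.rpow_one, slope_def_field]
    field_simp
    ring
  have : (nhdsWithin t₀ (Ioo 0 t₀)).NeBot := by
    rw [← mem_closure_iff_nhdsWithin_neBot, closure_Ioo h0.ne]
    exact right_mem_Icc.2 h0.le
  refine le_of_tendsto_of_tendsto hz hlim ?_
  filter_upwards [self_mem_nhdsWithin] with b hb
  obtain ⟨hb0, hbt⟩ := hb
  have hder : ∀ x ∈ Icc 0 b, HasDerivAt (fun s => (t₀ - s) ^ (-α)) (α * (t₀ - x) ^ (-α - 1)) x := by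
    intro x hx
    have := ((hasDerivAt_id x).const_sub t₀).rpow_const (p := -α)
      (Or.inl (by simp only [id_eq]; linarith [hx.2]))
    change HasDerivAt (fun s => (t₀ - s) ^ (-α)) (-1 * -α * (t₀ - x) ^ (-α - 1)) x at this
    rwa [neg_one_mul, neg_neg] at this
  have hu'c : ContinuousOn (fun x => α * (t₀ - x) ^ (-α - 1)) (uIcc 0 b) := by
    rw [uIcc_of_le hb0.le]
    refine continuousOn_const.mul ((continuousOn_const.sub continuousOn_id).rpow_const ?_)
    intro x hx
    left
    change t₀ - x ≠ 0
    linarith [hx.2]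
  have hibp := intervalIntegral.integral_mul_deriv_eq_deriv_mul_of_hasDerivAt
    (a := 0) (b := b) (u := fun s => (t₀ - s) ^ (-α)) (v := fun s => f s - f t₀)
    (u' := fun x => α * (t₀ - x) ^ (-α - 1)) (v' := deriv f)
    (by
      rw [uIcc_of_le hb0.le]
      exact fun x hx => (hder x hx).continuousAt.continuousWithinAt)
    (by
      rw [uIcc_of_le hb0.le]
      exact (hf.mono (Icc_subset_Icc_right (hbt.le.trans h1))).sub continuousOn_const)
    (by
      intro x hx
      rw [min_eq_left hb0.le, max_eq_right hb0.le] at hx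
      exact hder x ⟨hx.1.le, hx.2.le⟩)
    (by
      intro x hx
      rw [min_eq_left hb0.le, max_eq_right hb0.le] at hx
      exact ((hf1.differentiableOn one_ne_zero).differentiableAt
        (Ioc_mem_nhds hx.1 (by linarith [hx.2]))).hasDerivAt.sub_const _)
    hu'c.intervalIntegrable
    (hfint.mono_set (by
      rw [uIcc_of_le hb0.le, uIcc_of_le hT.le]
      exact Icc_subset_Icc_right (hbt.le.trans h1)))
  rw [hibp]
  have e1 : (t₀ - 0) ^ (-α) * (f 0 - f t₀) ≤ 0 :=
    mul_nonpos_of_nonneg_of_nonpos (Real.rpow_nonneg (by linarith) _)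
      (sub_nonpos.2 (hmax 0 ⟨le_rfl, hT.le⟩))
  have e2 : 0 ≤ ∫ x in (0:ℝ)..b, -(α * (t₀ - x) ^ (-α - 1) * (f x - f t₀)) := by
    refine intervalIntegral.integral_nonneg hb0.le fun x hx => ?_
    refine neg_nonneg.2 (mul_nonpos_of_nonneg_of_nonpos
      (mul_nonneg hα.le (Real.rpow_nonneg (by linarith [hx.2]) _))
      (sub_nonpos.2 (hmax x ⟨hx.1, by linarith [hx.2]⟩)))
  rw [intervalIntegral.integral_neg] at e2
  linarith
end

section
/- (Maximum principle) Let u be a solution of the time-fractional diffusion equation (D_t^α u)(x,t) = ∑_{j=1}^n ∂/∂x_j(p(x) ∂u/∂x_j(x,t)) − q(x)u(x,t) + F(x,t) in Ω_T = G×(0,T), and assume F(x,t) ≤ 0 for all (x,t) ∈ Ω_T. Then for every (x,t) ∈ Ḡ×[0,T] one has u(x,t) ≤ max{0, max_{(y,s) ∈ S_G^T} u(y,s)}, where S_G^T = (Ḡ×{0}) ∪ (S×[0,T]) is the parabolic boundary; in particular either u ≤ 0 on Ḡ×[0,T] or u attains its positive maximum on S_G^T. -/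
open MeasureTheory Set Filter Topology

/-- The elliptic part `div(p(x) grad w)(x) = ∑_j ∂/∂x_j (p(x) ∂w/∂x_j)(x)`. -/
noncomputable def divPGrad (n : ℕ) (p : (Fin n → ℝ) → ℝ) (w : (Fin n → ℝ) → ℝ)
    (x : Fin n → ℝ) : ℝ :=
  ∑ j : Fin n, fderiv ℝ (fun y => p y * fderiv ℝ w y (Pi.single j 1)) x (Pi.single j 1)

/-- `u` is a (classical) solution of the time-fractional diffusion equation
`(D_t^α u)(x,t) = div(p grad u) − q u + F` in `Ω_T = G × (0,T)`:
`u ∈ C(Ḡ×[0,T])`, twice continuously differentiable in `x` on `G`, for each `x ∈ G`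
the map `t ↦ u(x,t)` is `C¹` on `(0,T]` with integrable derivative, and the equation
holds pointwise in `Ω_T`. -/
def IsSolutionTFDE (n : ℕ) (α T : ℝ) (G : Set (Fin n → ℝ))
    (p q : (Fin n → ℝ) → ℝ) (F : (Fin n → ℝ) → ℝ → ℝ)
    (u : (Fin n → ℝ) → ℝ → ℝ) : Prop :=
  ContinuousOn (fun z : (Fin n → ℝ) × ℝ => u z.1 z.2) (closure G ×ˢ Set.Icc 0 T) ∧
  (∀ t ∈ Set.Ioo (0:ℝ) T, ContDiffOn ℝ 2 (fun x => u x t) G) ∧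
  (∀ x ∈ G, ContDiffOn ℝ 1 (u x) (Set.Ioc 0 T) ∧
    IntervalIntegrable (deriv (u x)) MeasureTheory.volume 0 T) ∧
  (∀ x ∈ G, ∀ t ∈ Set.Ioo (0:ℝ) T,
    caputo α (u x) t = divPGrad n p (fun y => u y t) x - q x * u x t + F x t)

/-- The Caputo derivative is strictly positive at a maximum point exceeding the initial value. -/
theorem caputo_pos_of_max (α T t : ℝ) (hα : 0 < α) (hα1 : α < 1) (ht : t ∈ Set.Ioo (0:ℝ) T)
    (f : ℝ → ℝ) (hc : ContinuousOn f (Set.Icc 0 T)) (hf : ContDiffOn ℝ 1 f (Set.Ioc 0 T))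
    (hint : IntervalIntegrable (deriv f) MeasureTheory.volume 0 T)
    (hmax : ∀ s ∈ Set.Icc 0 t, f s ≤ f t) (h0 : f 0 < f t) :
    0 < caputo α f t := by
  obtain ⟨ht0, htT⟩ := ht
  have hsub : Set.Ioo 0 T ⊆ Set.Ioc 0 T := Set.Ioo_subset_Ioc_self
  have hf' : ContDiffOn ℝ 1 f (Set.Ioo 0 T) := hf.mono hsub
  have hd : ∀ s ∈ Set.Ioo 0 T, HasDerivAt f (deriv f s) s := fun s hs =>
    ((hf'.differentiableOn (by norm_num)).differentiableAt (isOpen_Ioo.mem_nhds hs)).hasDerivAt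
  have hdc : ContinuousOn (deriv f) (Set.Ioo 0 T) :=
    hf'.continuousOn_deriv_of_isOpen isOpen_Ioo (by norm_num)
  -- integrability
  have hI : IntervalIntegrable (fun s => (t - s) ^ (-α) * deriv f s) volume 0 t := by
    have h1 : IntervalIntegrable (fun s => (t - s) ^ (-α) * deriv f s) volume 0 (t/2) := by
      apply IntervalIntegrable.continuousOn_mul
      · apply hint.mono_set
        rw [Set.uIcc_of_le (by linarith), Set.uIcc_of_le (by linarith)]
        exact Set.Icc_subset_Icc le_rfl (by linarith)
      · rw [Set.uIcc_of_le (by linarith)]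
        apply ContinuousOn.rpow_const (by fun_prop)
        intro s hs
        left
        have := hs.2
        intro h
        linarith
    have h2 : IntervalIntegrable (fun s => (t - s) ^ (-α) * deriv f s) volume (t/2) t := by
      apply IntervalIntegrable.mul_continuousOn
      · have := (intervalIntegral.intervalIntegrable_rpow' (a := t/2) (b := 0) (r := -α)
          (by linarith)).comp_sub_left t
        have e : t - t / 2 = t / 2 := by ring
        simpa [e] using this
      · rw [Set.uIcc_of_le (by linarith)]
        apply hdc.mono
        intro s hs
        exact ⟨by linarith [hs.1], by linarith [hs.2]⟩
    exact h1.trans h2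
  have hcont : ContinuousOn (fun s => - ((t - s) ^ (-α) * (f t - f s))) (Set.Icc 0 t) := by
    intro s hs
    rcases eq_or_lt_of_le hs.2 with h | h
    · subst h
      have hO : (fun x => f s - f x) =O[𝓝[Set.Icc 0 s] s] (fun x => s - x) := by
        have := (hd s ⟨ht0, htT⟩).differentiableAt.isBigO_sub
        exact ((this.neg_left.congr_left (fun x => by ring)).neg_right.congr_right
          (fun x => by ring)).mono nhdsWithin_le_nhds
      have hO2 : (fun x => - ((s - x) ^ (-α) * (f s - f x))) =O[𝓝[Set.Icc 0 s] s]
          (fun x => (s - x) ^ (1 - α)) := by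
        refine (((Asymptotics.isBigO_refl (fun x => (s - x) ^ (-α)) _).mul hO).neg_left).congr'
          (Eventually.of_forall fun _ => rfl) ?_
        filter_upwards [self_mem_nhdsWithin] with x hx
        rcases eq_or_lt_of_le hx.2 with h | h
        · subst h
          rw [sub_self, mul_zero, Real.zero_rpow (by linarith)]
        · rw [← Real.rpow_add_one (by linarith : s - x ≠ 0)]
          congr 1
          ring
      have hz : Tendsto (fun x => (s - x) ^ (1 - α)) (𝓝[Set.Icc 0 s] s) (𝓝 0) := by
        have : Continuous (fun x : ℝ => (s - x) ^ (1 - α)) :=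
          Continuous.rpow_const (by fun_prop) (fun x => Or.inr (by linarith))
        have h2 := this.tendsto s
        rw [sub_self, Real.zero_rpow (by linarith)] at h2
        exact h2.mono_left nhdsWithin_le_nhds
      have := hO2.trans_tendsto hz
      unfold ContinuousWithinAt
      simpa using this
    · have h1 : ContinuousWithinAt f (Set.Icc 0 t) s :=
        (hc s ⟨hs.1, by linarith⟩).mono (Set.Icc_subset_Icc le_rfl htT.le)
      have h2 : ContinuousWithinAt (fun s => (t - s) ^ (-α)) (Set.Icc 0 t) s := by
        apply ContinuousWithinAt.rpow_const (by fun_prop)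
        left
        intro h
        linarith
      exact (h2.mul (continuousWithinAt_const.sub h1)).neg
  have key := intervalIntegral.sub_le_integral_of_hasDeriv_right_of_le ht0.le hcont
    (g' := fun s => (t - s) ^ (-α) * deriv f s - α * (t - s) ^ (-α - 1) * (f t - f s))
    (φ := fun s => (t - s) ^ (-α) * deriv f s)
    (by
      intro s hs
      have hts : t - s ≠ 0 := by
        have := hs.2
        intro h
        linarith
      have h1 : HasDerivAt (fun s => (t - s) ^ (-α)) (-1 * (-α) * (t - s) ^ (-α - 1)) s :=
        ((hasDerivAt_id s).const_sub t).rpow_const (Or.inl hts)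
      have h2 : HasDerivAt (fun s => f t - f s) (-deriv f s) s :=
        (hd s ⟨hs.1, hs.2.trans htT⟩).const_sub (f t)
      have h3 := (h1.mul h2).neg
      refine HasDerivAt.hasDerivWithinAt ?_
      refine HasDerivAt.congr_deriv (f' := _) h3 ?_
      ring)
    ((intervalIntegrable_iff_integrableOn_Icc_of_le ht0.le).1 hI)
    (by
      intro s hs
      have h1 : 0 ≤ (t - s) ^ (-α - 1) := Real.rpow_nonneg (by linarith [hs.2]) _
      have h2 : 0 ≤ f t - f s := by linarith [hmax s ⟨hs.1.le, hs.2.le⟩]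
      have := mul_nonneg (mul_nonneg hα.le h1) h2
      linarith)
  simp only [sub_self, mul_zero, neg_zero, sub_zero, zero_sub, neg_neg] at key
  have hpos : 0 < t ^ (-α) * (f t - f 0) := mul_pos (Real.rpow_pos_of_pos ht0 _) (by linarith)
  unfold caputo
  exact mul_pos (one_div_pos.2 (Real.Gamma_pos_of_pos (by linarith))) (by linarith)

/-- One-dimensional second order necessary condition at a local maximum. -/
theorem second_deriv_nonpos_of_isLocalMax (φ ψ : ℝ → ℝ) (a c : ℝ) (hmax : IsLocalMax φ a)
    (hφ : ∀ᶠ s in 𝓝 a, HasDerivAt φ (ψ s) s) (hψ : HasDerivAt ψ c a) : c ≤ 0 := by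
  by_contra! hc
  have hev : deriv φ =ᶠ[𝓝 a] ψ := hφ.mono fun s hs => hs.deriv
  have hdd : deriv (deriv φ) a = c := by rw [hev.deriv_eq, hψ.deriv]
  have hmin : IsLocalMin φ a := isLocalMin_of_deriv_deriv_pos (by rw [hdd]; exact hc)
    hmax.deriv_eq_zero hφ.self_of_nhds.continuousAt
  have hconst : φ =ᶠ[𝓝 a] fun _ => φ a := by
    filter_upwards [hmax, hmin] with s h1 h2 using le_antisymm h1 h2
  have : deriv (deriv φ) a = 0 := by
    rw [hconst.deriv.deriv_eq]
    simp
  linarith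

/-- The elliptic part is nonpositive at an interior local maximum. -/
theorem divPGrad_nonpos_of_isLocalMax (n : ℕ) (p w : (Fin n → ℝ) → ℝ) (x : Fin n → ℝ)
    (hp : DifferentiableAt ℝ p x) (hpos : 0 ≤ p x) (hw : ContDiffAt ℝ 2 w x)
    (hmax : IsLocalMax w x) : divPGrad n p w x ≤ 0 := by
  unfold divPGrad
  apply Finset.sum_nonpos
  intro j _
  set e : Fin n → ℝ := Pi.single j 1
  have hfd : DifferentiableAt ℝ (fderiv ℝ w) x :=
    (hw.fderiv_right (m := 1) (by norm_num)).differentiableAt (by norm_num)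
  have hg : DifferentiableAt ℝ (fun y => fderiv ℝ w y e) x := hfd.clm_apply (by fun_prop)
  rw [fderiv_fun_mul hp hg, hmax.fderiv_eq_zero]
  simp only [ContinuousLinearMap.zero_apply, zero_smul, add_zero, ContinuousLinearMap.smul_apply,
    smul_eq_mul]
  apply mul_nonpos_of_nonneg_of_nonpos hpos
  have hl : ∀ s : ℝ, HasDerivAt (fun s : ℝ => x + s • e) e s := fun s => by
    simpa using ((hasDerivAt_id s).smul_const e).const_add x
  have hlc : Tendsto (fun s : ℝ => x + s • e) (𝓝 0) (𝓝 x) := by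
    simpa using (hl 0).continuousAt.tendsto
  have hx0 : x + (0:ℝ) • e = x := by simp
  refine second_deriv_nonpos_of_isLocalMax (fun s => w (x + s • e))
    (fun s => fderiv ℝ w (x + s • e) e) 0 _ ?_ ?_ ?_
  · have := hlc.eventually hmax
    unfold IsLocalMax IsMaxFilter
    simpa using this
  · have hev : ∀ᶠ y in 𝓝 x, DifferentiableAt ℝ w y := by
      filter_upwards [hw.eventually (by simp)] with y hy using hy.differentiableAt (by norm_num)
    filter_upwards [hlc.eventually hev] with s hs
    exact hs.hasFDerivAt.comp_hasDerivAt s (hl s)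
  · have h := hg.hasFDerivAt
    rw [← hx0] at h
    have := h.comp_hasDerivAt 0 (hl 0)
    rwa [hx0] at this

/-- Maximum principle: if `u` solves the time-fractional diffusion
equation in `Ω_T = G×(0,T)` with `F ≤ 0` in `Ω_T`, then for every
`(x,t) ∈ Ḡ×[0,T]`, `u(x,t) ≤ max{0, sup_{S_G^T} u}` where
`S_G^T = (Ḡ×{0}) ∪ (S×[0,T])` is the parabolic boundary. -/
theorem maximum_principle_TFDE (n : ℕ) (α T : ℝ) (hα : 0 < α) (hα1 : α < 1) (hT : 0 < T)
    (G : Set (Fin n → ℝ)) (hG : IsOpen G) (hGb : Bornology.IsBounded G)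
    (p q : (Fin n → ℝ) → ℝ)
    (hp : ContDiffOn ℝ 1 p (closure G)) (hppos : ∀ x ∈ closure G, 0 < p x)
    (hq : ContinuousOn q (closure G)) (hqnn : ∀ x ∈ closure G, 0 ≤ q x)
    (F : (Fin n → ℝ) → ℝ → ℝ)
    (hF : ContinuousOn (fun z : (Fin n → ℝ) × ℝ => F z.1 z.2) (G ×ˢ Set.Ioo 0 T))
    (u : (Fin n → ℝ) → ℝ → ℝ)
    (hu : IsSolutionTFDE n α T G p q F u)
    (hFneg : ∀ x ∈ G, ∀ t ∈ Set.Ioo (0:ℝ) T, F x t ≤ 0) :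
    ∀ x ∈ closure G, ∀ t ∈ Set.Icc (0:ℝ) T,
      u x t ≤ max 0 (sSup ((fun z : (Fin n → ℝ) × ℝ => u z.1 z.2) ''
        ((closure G ×ˢ ({0} : Set ℝ)) ∪ (frontier G ×ˢ Set.Icc 0 T)))) := by
  obtain ⟨hcont, hC2, htime, heq⟩ := hu
  set B : Set ((Fin n → ℝ) × ℝ) :=
    (closure G ×ˢ ({0} : Set ℝ)) ∪ (frontier G ×ˢ Set.Icc 0 T) with hB
  set M := sSup ((fun z : (Fin n → ℝ) × ℝ => u z.1 z.2) '' B) with hM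
  have hK : IsCompact (closure G) := hGb.isCompact_closure
  have hBsub : B ⊆ closure G ×ˢ Set.Icc 0 T := by
    rintro ⟨y, s⟩ (⟨hy, hs⟩ | ⟨hy, hs⟩)
    · simp only [Set.mem_singleton_iff] at hs
      exact ⟨hy, by simp [hs, hT.le]⟩
    · exact ⟨frontier_subset_closure hy, hs⟩
  have hbdd : BddAbove ((fun z : (Fin n → ℝ) × ℝ => u z.1 z.2) '' B) :=
    ((hK.prod isCompact_Icc).bddAbove_image hcont).mono (Set.image_mono hBsub)
  have hle : ∀ z ∈ B, u z.1 z.2 ≤ M := fun z hz => le_csSup hbdd ⟨z, hz, rfl⟩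
  have hcx : ∀ x ∈ closure G, ContinuousOn (u x) (Set.Icc 0 T) := fun x hx =>
    hcont.comp (f := fun s : ℝ => (x, s)) (by fun_prop) (fun s hs => ⟨hx, hs⟩)
  -- the bound for times strictly before `T`
  have main : ∀ x ∈ closure G, ∀ t ∈ Set.Ico (0:ℝ) T, u x t ≤ max 0 M := by
    intro x hx t ht
    by_contra! hlt
    have hsub : closure G ×ˢ Set.Icc 0 t ⊆ closure G ×ˢ Set.Icc 0 T :=
      Set.prod_mono le_rfl (Set.Icc_subset_Icc le_rfl ht.2.le)
    obtain ⟨⟨y, s⟩, ⟨hy, hs⟩, hmax⟩ := (hK.prod isCompact_Icc).exists_isMaxOn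
      ⟨(x, t), hx, ht.1, le_rfl⟩ (hcont.mono hsub)
    simp only at hy hs
    have hmax' : ∀ z ∈ closure G, ∀ r ∈ Set.Icc 0 t, u z r ≤ u y s := fun z hz r hr =>
      hmax (show (z, r) ∈ closure G ×ˢ Set.Icc 0 t from ⟨hz, hr⟩)
    have hbig : max 0 M < u y s := hlt.trans_le (hmax' x hx t ⟨ht.1, le_rfl⟩)
    have hpos : 0 < u y s := (le_max_left _ _).trans_lt hbig
    have hMlt : M < u y s := (le_max_right _ _).trans_lt hbig
    have hnB : (y, s) ∉ B := fun h => absurd (hle _ h) (not_le.2 hMlt)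
    have hyG : y ∈ G := by
      by_contra h
      exact hnB (Or.inr ⟨by rw [hG.frontier_eq]; exact ⟨hy, h⟩, hs.1, hs.2.trans ht.2.le⟩)
    have hs0 : 0 < s := by
      rcases eq_or_lt_of_le hs.1 with h | h
      · exact absurd (Or.inl ⟨hy, h.symm⟩) hnB
      · exact h
    have hsT : s ∈ Set.Ioo 0 T := ⟨hs0, hs.2.trans_lt ht.2⟩
    have h0 : u y 0 < u y s := (hle (y, 0) (Or.inl ⟨hy, rfl⟩)).trans_lt hMlt
    have hcap := caputo_pos_of_max α T s hα hα1 hsT (u y) (hcx y hy) (htime y hyG).1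
      (htime y hyG).2 (fun r hr => hmax' y hy r ⟨hr.1, hr.2.trans hs.2⟩) h0
    have hnG : G ∈ 𝓝 y := hG.mem_nhds hyG
    have hdiv := divPGrad_nonpos_of_isLocalMax n p (fun z => u z s) y
      (((hp.mono subset_closure).differentiableOn (by norm_num)).differentiableAt hnG)
      (hppos y hy).le ((hC2 s hsT).contDiffAt hnG)
      (by
        filter_upwards [hnG] with z hz
        exact hmax' z (subset_closure hz) s hs)
    have hqu := mul_nonneg (hqnn y hy) hpos.le
    have hFy := hFneg y hyG s hsT
    have := heq y hyG s hsT
    linarith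
  intro x hx t ht
  have hcl : closure (Set.Ico 0 T) = Set.Icc 0 T := closure_Ico hT.ne
  exact le_on_closure (main x hx) (by rw [hcl]; exact hcx x hx) continuousOn_const
    (by rw [hcl]; exact ht)
end

section
/- (Uniqueness) Let u and ũ both be solutions of the time-fractional diffusion equation (D_t^α u)(x,t) = ∑_{j=1}^n ∂/∂x_j(p(x) ∂u/∂x_j(x,t)) − q(x)u(x,t) + F(x,t) in Ω_T = G×(0,T) with the same source function F, satisfying the same initial condition u(x,0) = u₀(x) for x ∈ Ḡ and the same boundary condition u(x,t) = v(x,t) for (x,t) ∈ S×[0,T]. Then u = ũ on Ḡ×[0,T]. -/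
open MeasureTheory Set Filter Topology

/-- The integrand of the Caputo derivative is integrable. -/
theorem caputo_integrable {α T t : ℝ} (hα1 : α < 1) (ht : t ∈ Set.Ioo (0:ℝ) T)
    {f : ℝ → ℝ} (hf : ContDiffOn ℝ 1 f (Set.Ioc 0 T))
    (hi : IntervalIntegrable (deriv f) volume 0 T) :
    IntervalIntegrable (fun s => (t - s) ^ (-α) * deriv f s) volume 0 t := by
  obtain ⟨h0, hT⟩ := ht
  have hc : ContinuousOn (deriv f) (Set.Ioo 0 T) :=
    (hf.mono Set.Ioo_subset_Ioc_self).continuousOn_deriv_of_isOpen isOpen_Ioo le_rfl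
  have h1 : IntervalIntegrable (fun s => (t - s) ^ (-α) * deriv f s) volume 0 (t/2) := by
    apply IntervalIntegrable.continuousOn_mul
    · apply hi.mono_set
      rw [Set.uIcc_of_le (by linarith), Set.uIcc_of_le (by linarith)]
      exact Set.Icc_subset_Icc le_rfl (by linarith)
    · rw [Set.uIcc_of_le (by linarith)]
      intro s hs
      apply ContinuousAt.continuousWithinAt
      apply ContinuousAt.rpow_const (by fun_prop)
      left
      have := hs.2
      intro h
      linarith
  have h2 : IntervalIntegrable (fun s => (t - s) ^ (-α) * deriv f s) volume (t/2) t := by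
    apply IntervalIntegrable.mul_continuousOn
    · have := (intervalIntegral.intervalIntegrable_rpow' (a := t - t/2) (b := t - t)
        (r := -α) (by linarith)).comp_sub_left t
      simpa using this
    · rw [Set.uIcc_of_le (by linarith)]
      exact hc.mono fun s hs => ⟨by linarith [hs.1], by linarith [hs.2]⟩
  exact h1.trans h2

/-- Extremum principle for the Caputo derivative. -/
theorem caputo_pos {α T t : ℝ} (hα : 0 < α) (hα1 : α < 1) (ht : t ∈ Set.Ioo (0:ℝ) T)
    {f : ℝ → ℝ} (hfc : ContinuousOn f (Set.Icc 0 T)) (hf : ContDiffOn ℝ 1 f (Set.Ioc 0 T))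
    (hi : IntervalIntegrable (deriv f) volume 0 T)
    (hmax : ∀ s ∈ Set.Icc 0 t, f s ≤ f t) (h0t : f 0 < f t) : 0 < caputo α f t := by
  have hint := caputo_integrable hα1 ht hf hi
  obtain ⟨h0, hT⟩ := ht
  have hd : ∀ s ∈ Set.Ioo 0 T, HasDerivAt f (deriv f s) s := fun s hs =>
    (((hf.mono Set.Ioo_subset_Ioc_self).differentiableOn one_ne_zero).differentiableAt
      (isOpen_Ioo.mem_nhds hs)).hasDerivAt
  unfold caputo
  apply mul_pos (one_div_pos.2 (Real.Gamma_pos_of_pos (by linarith)))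
  have key := intervalIntegral.sub_le_integral_of_hasDeriv_right_of_le
    (g := fun s => (t - s) ^ (-α) * (f s - f t))
    (g' := fun s => ((-1) * (-α) * (t - s) ^ (-α - 1)) * (f s - f t) + (t - s) ^ (-α) * deriv f s)
    (φ := fun s => (t - s) ^ (-α) * deriv f s) h0.le ?_ ?_
    ((intervalIntegrable_iff_integrableOn_Icc_of_le h0.le).1 hint) ?_
  · have : 0 < t ^ (-α) * (f t - f 0) := mul_pos (Real.rpow_pos_of_pos h0 _) (by linarith)
    simp only [sub_self, mul_zero, sub_zero] at key
    linarith
  · intro s hs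
    rcases hs.2.lt_or_eq with hlt | rfl
    · apply ContinuousWithinAt.mul
      · apply ContinuousAt.continuousWithinAt
        apply ContinuousAt.rpow_const (by fun_prop)
        left
        intro h
        linarith
      · exact ((hfc s ⟨hs.1, by linarith⟩).mono (Set.Icc_subset_Icc le_rfl hT.le)).sub
          continuousWithinAt_const
    · have hO : (fun x => f x - f s) =O[𝓝[Set.Icc 0 s] s] fun x => x - s :=
        (hd s ⟨h0, hT⟩).isBigO_sub.mono nhdsWithin_le_nhds
      have hO2 := (Asymptotics.isBigO_refl (fun x => (s - x) ^ (-α)) (𝓝[Set.Icc 0 s] s)).mul hO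
      have hlim : Tendsto (fun x => (s - x) ^ (-α) * (x - s)) (𝓝[Set.Icc 0 s] s) (𝓝 0) := by
        have h1 : Tendsto (fun x => -(s - x) ^ (1 - α)) (𝓝[Set.Icc 0 s] s) (𝓝 0) := by
          have : ContinuousAt (fun x => -(s - x) ^ (1 - α)) s := by
            apply ContinuousAt.neg
            apply ContinuousAt.rpow_const (by fun_prop)
            right
            linarith
          have h2 := this.tendsto
          simp only [sub_self] at h2
          rw [Real.zero_rpow (by linarith), neg_zero] at h2
          exact h2.mono_left nhdsWithin_le_nhds
        refine h1.congr' ?_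
        filter_upwards [self_mem_nhdsWithin] with x hx
        rcases hx.2.lt_or_eq with hlt | rfl
        · rw [show 1 - α = -α + 1 by ring, Real.rpow_add_one (by intro h; linarith)]
          ring
        · simp [Real.zero_rpow (show 1 - α ≠ 0 by intro h; linarith)]
      have := hO2.trans_tendsto hlim
      simpa [ContinuousWithinAt] using this
  · intro s hs
    apply HasDerivAt.hasDerivWithinAt
    have h1 : HasDerivAt (fun s => t - s) (-1) s := by
      simpa using (hasDerivAt_id s).const_sub t
    have h2 := h1.rpow_const (p := -α) (Or.inl (by intro h; linarith [hs.2]))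
    exact h2.mul ((hd s ⟨hs.1, hs.2.trans hT⟩).sub_const _)
  · intro s hs
    have h1 : 0 ≤ α * (t - s) ^ (-α - 1) :=
      mul_nonneg hα.le (Real.rpow_nonneg (by linarith [hs.2]) _)
    have h2 := hmax s ⟨hs.1.le, hs.2.le⟩
    have h3 := mul_nonneg h1 (sub_nonneg.2 h2)
    nlinarith

theorem caputo_sub {α T t : ℝ} (hα1 : α < 1) (ht : t ∈ Set.Ioo (0:ℝ) T)
    {f g : ℝ → ℝ} (hf : ContDiffOn ℝ 1 f (Set.Ioc 0 T))
    (hfi : IntervalIntegrable (deriv f) volume 0 T) (hg : ContDiffOn ℝ 1 g (Set.Ioc 0 T))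
    (hgi : IntervalIntegrable (deriv g) volume 0 T) :
    caputo α (fun s => f s - g s) t = caputo α f t - caputo α g t := by
  unfold caputo
  rw [← mul_sub, ← intervalIntegral.integral_sub (caputo_integrable hα1 ht hf hfi)
    (caputo_integrable hα1 ht hg hgi)]
  congr 1
  apply intervalIntegral.integral_congr_ae
  have hne : ∀ᵐ s : ℝ, s ≠ t := by simp [ae_iff]
  filter_upwards with s hs
  rw [Set.uIoc_of_le ht.1.le] at hs
  have hs' : s ∈ Set.Ioo 0 T := ⟨hs.1, hs.2.trans_lt ht.2⟩
  have d : ∀ h : ℝ → ℝ, ContDiffOn ℝ 1 h (Set.Ioc 0 T) → DifferentiableAt ℝ h s := fun h hh =>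
    ((hh.mono Set.Ioo_subset_Ioc_self).differentiableOn one_ne_zero).differentiableAt
      (isOpen_Ioo.mem_nhds hs')
  rw [deriv_fun_sub (d f hf) (d g hg)]
  ring

theorem deriv_sub_intervalIntegrable {T : ℝ} (hT : 0 < T)
    {f g : ℝ → ℝ} (hf : ContDiffOn ℝ 1 f (Set.Ioc 0 T))
    (hfi : IntervalIntegrable (deriv f) volume 0 T) (hg : ContDiffOn ℝ 1 g (Set.Ioc 0 T))
    (hgi : IntervalIntegrable (deriv g) volume 0 T) :
    IntervalIntegrable (deriv fun s => f s - g s) volume 0 T := by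
  refine (hfi.sub hgi).congr_ae ?_
  rw [Filter.EventuallyEq, ae_restrict_iff' measurableSet_uIoc]
  have hne : ∀ᵐ s : ℝ, s ≠ T := by simp [ae_iff]
  filter_upwards [hne] with s hsT hs
  rw [Set.uIoc_of_le hT.le] at hs
  have hs' : s ∈ Set.Ioo 0 T := ⟨hs.1, lt_of_le_of_ne hs.2 hsT⟩
  have d : ∀ h : ℝ → ℝ, ContDiffOn ℝ 1 h (Set.Ioc 0 T) → DifferentiableAt ℝ h s := fun h hh =>
    ((hh.mono Set.Ioo_subset_Ioc_self).differentiableOn one_ne_zero).differentiableAt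
      (isOpen_Ioo.mem_nhds hs')
  rw [deriv_fun_sub (d f hf) (d g hg)]

theorem partial_differentiableAt {n : ℕ} {G : Set (Fin n → ℝ)} (hG : IsOpen G)
    {w : (Fin n → ℝ) → ℝ} (hw : ContDiffOn ℝ 2 w G) {x : Fin n → ℝ} (hx : x ∈ G)
    (e : Fin n → ℝ) : DifferentiableAt ℝ (fun y => fderiv ℝ w y e) x := by
  have h1 : ContDiffOn ℝ 1 (fderiv ℝ w) G := hw.fderiv_of_isOpen hG (by norm_num)
  have h2 : DifferentiableAt ℝ (fderiv ℝ w) x :=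
    (h1.differentiableOn one_ne_zero).differentiableAt (hG.mem_nhds hx)
  exact h2.clm_apply (differentiableAt_const e)

theorem divPGrad_sub {n : ℕ} {G : Set (Fin n → ℝ)} (hG : IsOpen G) {p : (Fin n → ℝ) → ℝ}
    (hp : ContDiffOn ℝ 1 p (closure G))
    {w z : (Fin n → ℝ) → ℝ} (hw : ContDiffOn ℝ 2 w G) (hz : ContDiffOn ℝ 2 z G)
    {x : Fin n → ℝ} (hx : x ∈ G) :
    divPGrad n p (fun y => w y - z y) x = divPGrad n p w x - divPGrad n p z x := by
  unfold divPGrad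
  rw [← Finset.sum_sub_distrib]
  refine Finset.sum_congr rfl fun j _ => ?_
  have hpd : DifferentiableAt ℝ p x :=
    ((hp.mono subset_closure).differentiableOn one_ne_zero).differentiableAt (hG.mem_nhds hx)
  have he : (fun y => p y * fderiv ℝ (fun y => w y - z y) y (Pi.single j 1)) =ᶠ[𝓝 x]
      fun y => p y * fderiv ℝ w y (Pi.single j 1) - p y * fderiv ℝ z y (Pi.single j 1) := by
    filter_upwards [hG.mem_nhds hx] with y hy
    rw [fderiv_fun_sub ((hw.differentiableOn two_ne_zero).differentiableAt (hG.mem_nhds hy))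
      ((hz.differentiableOn two_ne_zero).differentiableAt (hG.mem_nhds hy))]
    simp [mul_sub]
  rw [he.fderiv_eq, fderiv_fun_sub (hpd.fun_mul (partial_differentiableAt hG hw hx _))
    (hpd.fun_mul (partial_differentiableAt hG hz hx _))]
  rfl

theorem second_partial_nonpos {n : ℕ} {G : Set (Fin n → ℝ)} (hG : IsOpen G)
    {w : (Fin n → ℝ) → ℝ} (hw : ContDiffOn ℝ 2 w G)
    {x : Fin n → ℝ} (hx : x ∈ G) (hmax : IsLocalMax w x) (e : Fin n → ℝ) :
    fderiv ℝ (fun y => fderiv ℝ w y e) x e ≤ 0 := by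
  by_contra! hcon
  have hl : ∀ s : ℝ, HasDerivAt (fun s : ℝ => x + s • e) e s := fun s => by
    simpa using ((hasDerivAt_id s).smul_const e).const_add x
  have hlc : Continuous (fun s : ℝ => x + s • e) := by fun_prop
  have h0 : (fun s : ℝ => x + s • e) 0 = x := by simp
  have hG0 : ∀ᶠ s : ℝ in 𝓝 0, x + s • e ∈ G :=
    hlc.continuousAt.eventually_mem (by simpa using hG.mem_nhds hx)
  have hd1 : ∀ᶠ s : ℝ in 𝓝 0,
      HasDerivAt (fun s : ℝ => w (x + s • e)) (fderiv ℝ w (x + s • e) e) s := by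
    filter_upwards [hG0] with s hs
    exact ((hw.differentiableOn two_ne_zero).differentiableAt
      (hG.mem_nhds hs)).hasFDerivAt.comp_hasDerivAt s (hl s)
  have hderiv : deriv (fun s : ℝ => w (x + s • e)) =ᶠ[𝓝 0] fun s => fderiv ℝ w (x + s • e) e :=
    hd1.mono fun s hs => hs.deriv
  have hd2 : HasDerivAt (fun s : ℝ => fderiv ℝ w (x + s • e) e)
      (fderiv ℝ (fun y => fderiv ℝ w y e) x e) 0 := by
    have := (partial_differentiableAt hG hw hx e).hasFDerivAt
    rw [← h0] at this
    have h := this.comp_hasDerivAt (0:ℝ) (hl 0)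
    rw [h0] at h
    exact h
  have hdd : deriv (deriv (fun s : ℝ => w (x + s • e))) 0 =
      fderiv ℝ (fun y => fderiv ℝ w y e) x e := by
    rw [hderiv.deriv_eq]
    exact hd2.deriv
  have hmax0 : IsLocalMax (fun s : ℝ => w (x + s • e)) 0 := by
    have h := hlc.continuousAt (x := 0)
    have h' : Tendsto (fun s : ℝ => x + s • e) (𝓝 0) (𝓝 x) := by simpa using h.tendsto
    filter_upwards [h'.eventually hmax] with s hs
    simpa using hs
  have hmin0 : IsLocalMin (fun s : ℝ => w (x + s • e)) 0 :=
    isLocalMin_of_deriv_deriv_pos (by rw [hdd]; exact hcon) hmax0.deriv_eq_zero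
      hd1.self_of_nhds.continuousAt
  have hconst : (fun s : ℝ => w (x + s • e)) =ᶠ[𝓝 0] fun _ => w (x + (0:ℝ) • e) := by
    filter_upwards [hmax0, hmin0] with s h1 h2
    exact le_antisymm h1 h2
  have hz : deriv (deriv (fun s : ℝ => w (x + s • e))) 0 = 0 := by
    rw [hconst.deriv.deriv_eq]
    simp
  rw [hdd] at hz
  exact hcon.ne' hz

theorem divPGrad_nonpos {n : ℕ} {G : Set (Fin n → ℝ)} (hG : IsOpen G) {p : (Fin n → ℝ) → ℝ}
    (hp : ContDiffOn ℝ 1 p (closure G)) (hppos : ∀ x ∈ closure G, 0 < p x)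
    {w : (Fin n → ℝ) → ℝ} (hw : ContDiffOn ℝ 2 w G)
    {x : Fin n → ℝ} (hx : x ∈ G) (hmax : IsLocalMax w x) : divPGrad n p w x ≤ 0 := by
  unfold divPGrad
  refine Finset.sum_nonpos fun j _ => ?_
  have hpd : DifferentiableAt ℝ p x :=
    ((hp.mono subset_closure).differentiableOn one_ne_zero).differentiableAt (hG.mem_nhds hx)
  rw [fderiv_fun_mul hpd (partial_differentiableAt hG hw hx _)]
  have h := second_partial_nonpos hG hw hx hmax (Pi.single j 1)
  have := mul_nonneg (hppos x (subset_closure hx)).le (neg_nonneg.2 h)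
  simp only [hmax.fderiv_eq_zero, ContinuousLinearMap.add_apply, ContinuousLinearMap.smul_apply,
    ContinuousLinearMap.zero_apply, zero_smul, add_zero, smul_eq_mul]
  linarith

theorem TFDE_le {n : ℕ} {α T : ℝ} (hα : 0 < α) (hα1 : α < 1) (hT : 0 < T)
    {G : Set (Fin n → ℝ)} (hG : IsOpen G) (hGb : Bornology.IsBounded G)
    {p q : (Fin n → ℝ) → ℝ}
    (hp : ContDiffOn ℝ 1 p (closure G)) (hppos : ∀ x ∈ closure G, 0 < p x)
    (hqnn : ∀ x ∈ closure G, 0 ≤ q x)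
    {F : (Fin n → ℝ) → ℝ → ℝ} {u u' : (Fin n → ℝ) → ℝ → ℝ}
    (hu : IsSolutionTFDE n α T G p q F u) (hu' : IsSolutionTFDE n α T G p q F u')
    (hic : ∀ x ∈ closure G, u x 0 = u' x 0)
    (hbc : ∀ x ∈ frontier G, ∀ t ∈ Set.Icc (0:ℝ) T, u x t = u' x t) :
    ∀ x ∈ closure G, ∀ t ∈ Set.Ico (0:ℝ) T, u x t ≤ u' x t := by
  intro x₁ hx₁ t₁ ht₁
  by_contra! hcon
  obtain ⟨hc, hs, ht, he⟩ := hu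
  obtain ⟨hc', hs', ht', he'⟩ := hu'
  have hwc := hc.sub hc'
  have hK : IsCompact (closure G ×ˢ Set.Icc (0:ℝ) t₁) := hGb.isCompact_closure.prod isCompact_Icc
  obtain ⟨⟨x, t⟩, ⟨hx, htm⟩, hmax⟩ := hK.exists_isMaxOn
    ⟨(x₁, t₁), hx₁, ht₁.1, le_rfl⟩
    (hwc.mono (Set.prod_mono le_rfl (Set.Icc_subset_Icc le_rfl ht₁.2.le)))
  have hm : ∀ y ∈ closure G, ∀ s ∈ Set.Icc (0:ℝ) t₁, u y s - u' y s ≤ u x t - u' x t :=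
    fun y hy s hs => hmax (show (y, s) ∈ closure G ×ˢ Set.Icc (0:ℝ) t₁ from ⟨hy, hs⟩)
  simp only at hx htm
  have hpos : 0 < u x t - u' x t :=
    (sub_pos.2 hcon).trans_le (hm x₁ hx₁ t₁ ⟨ht₁.1, le_rfl⟩)
  have htT : t < T := htm.2.trans_lt ht₁.2
  have ht0 : 0 < t := by
    rcases htm.1.lt_or_eq with h | rfl
    · exact h
    · rw [hic x hx] at hpos
      simp at hpos
  have hxG : x ∈ G := by
    by_contra hxG
    have : x ∈ frontier G := by
      rw [frontier, hG.interior_eq]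
      exact ⟨hx, hxG⟩
    rw [hbc x this t ⟨ht0.le, htT.le⟩] at hpos
    simp at hpos
  have htI : t ∈ Set.Ioo 0 T := ⟨ht0, htT⟩
  obtain ⟨hf, hfi⟩ := ht x hxG
  obtain ⟨hf', hfi'⟩ := ht' x hxG
  have h1 : 0 < caputo α (fun s => u x s - u' x s) t := by
    refine caputo_pos hα hα1 htI ?_ (hf.sub hf') (deriv_sub_intervalIntegrable hT hf hfi hf' hfi')
      ?_ ?_
    · exact hwc.comp (f := fun s : ℝ => (x, s)) (by fun_prop) fun s hs => ⟨hx, hs⟩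
    · exact fun s hs => hm x hx s ⟨hs.1, hs.2.trans htm.2⟩
    · simpa [hic x hx] using hpos
  have h2 : divPGrad n p (fun y => u y t - u' y t) x ≤ 0 := by
    refine divPGrad_nonpos hG hp hppos ((hs t htI).sub (hs' t htI)) hxG ?_
    filter_upwards [hG.mem_nhds hxG] with y hy
    exact hm y (subset_closure hy) t htm
  rw [caputo_sub hα1 htI hf hfi hf' hfi', he x hxG t htI, he' x hxG t htI] at h1
  rw [divPGrad_sub hG hp (hs t htI) (hs' t htI) hxG] at h2
  have h3 := mul_nonneg (hqnn x hx) hpos.le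
  linarith

/-- Uniqueness: two solutions of the time-fractional diffusion equation
in `Ω_T = G×(0,T)` with the same source `F`, the same initial condition `u₀` on `Ḡ`
and the same boundary condition `v` on `S×[0,T]` coincide on `Ḡ×[0,T]`. -/
theorem uniqueness_TFDE (n : ℕ) (α T : ℝ) (hα : 0 < α) (hα1 : α < 1) (hT : 0 < T)
    (G : Set (Fin n → ℝ)) (hG : IsOpen G) (hGb : Bornology.IsBounded G)
    (p q : (Fin n → ℝ) → ℝ)
    (hp : ContDiffOn ℝ 1 p (closure G)) (hppos : ∀ x ∈ closure G, 0 < p x)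
    (hq : ContinuousOn q (closure G)) (hqnn : ∀ x ∈ closure G, 0 ≤ q x)
    (F : (Fin n → ℝ) → ℝ → ℝ)
    (hF : ContinuousOn (fun z : (Fin n → ℝ) × ℝ => F z.1 z.2) (G ×ˢ Set.Ioo 0 T))
    (u₀ : (Fin n → ℝ) → ℝ) (hu₀ : ContinuousOn u₀ (closure G))
    (v : (Fin n → ℝ) → ℝ → ℝ)
    (hv : ContinuousOn (fun z : (Fin n → ℝ) × ℝ => v z.1 z.2) (frontier G ×ˢ Set.Icc 0 T))
    (u u' : (Fin n → ℝ) → ℝ → ℝ)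
    (hu : IsSolutionTFDE n α T G p q F u) (hu' : IsSolutionTFDE n α T G p q F u')
    (huic : ∀ x ∈ closure G, u x 0 = u₀ x) (hu'ic : ∀ x ∈ closure G, u' x 0 = u₀ x)
    (hubc : ∀ x ∈ frontier G, ∀ t ∈ Set.Icc (0:ℝ) T, u x t = v x t)
    (hu'bc : ∀ x ∈ frontier G, ∀ t ∈ Set.Icc (0:ℝ) T, u' x t = v x t) :
    ∀ x ∈ closure G, ∀ t ∈ Set.Icc (0:ℝ) T, u x t = u' x t := by
  have hic : ∀ x ∈ closure G, u x 0 = u' x 0 := fun x hx => (huic x hx).trans (hu'ic x hx).symm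
  have hbc : ∀ x ∈ frontier G, ∀ t ∈ Set.Icc (0:ℝ) T, u x t = u' x t :=
    fun x hx t ht => (hubc x hx t ht).trans (hu'bc x hx t ht).symm
  have a := TFDE_le hα hα1 hT hG hGb hp hppos hqnn hu hu' hic hbc
  have b := TFDE_le hα hα1 hT hG hGb hp hppos hqnn hu' hu (fun x hx => (hic x hx).symm)
    (fun x hx t ht => (hbc x hx t ht).symm)
  intro x hx t ht
  have hcl : closure (Set.Ico (0:ℝ) T) = Set.Icc 0 T := closure_Ico hT.ne
  have c : ContinuousOn (u x) (closure (Set.Ico (0:ℝ) T)) := by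
    rw [hcl]
    exact hu.1.comp (f := fun s : ℝ => (x, s)) (by fun_prop) fun s hs => ⟨hx, hs⟩
  have c' : ContinuousOn (u' x) (closure (Set.Ico (0:ℝ) T)) := by
    rw [hcl]
    exact hu'.1.comp (f := fun s : ℝ => (x, s)) (by fun_prop) fun s hs => ⟨hx, hs⟩
  rw [← hcl] at ht
  exact le_antisymm (le_on_closure (a x hx) c c' ht) (le_on_closure (b x hx) c' c ht)
end

section
/- (Continuous dependence on the data) Let u and ũ be solutions of the time-fractional diffusion equations (D_t^α u) = ∑_{j=1}^n ∂/∂x_j(p ∂u/∂x_j) − q u + F and (D_t^α ũ) = ∑_{j=1}^n ∂/∂x_j(p ∂ũ/∂x_j) − q ũ + F̃ in Ω_T = G×(0,T), with initial conditions u₀, ũ₀ on Ḡ and boundary conditions v, ṽ on S×[0,T], respectively. If sup_{Ḡ×[0,T]}|F−F̃| ≤ ε, sup_{Ḡ}|u₀−ũ₀| ≤ ε₀, and sup_{S×[0,T]}|v−ṽ| ≤ ε₁, then sup_{Ḡ×[0,T]}|u−ũ| ≤ max{ε₀, ε₁} + (T^α/Γ(1+α)) ε. -/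
open MeasureTheory Set Filter Topology

lemma tfde_kernel_integrable {α t T : ℝ} (hα1 : α < 1) (ht : 0 < t) (htT : t < T) (g : ℝ → ℝ)
    (hg : IntervalIntegrable g volume 0 T) (hgc : ContinuousOn g (Ioo 0 T)) :
    IntervalIntegrable (fun s => (t - s) ^ (-α) * g s) volume 0 t := by
  have hk : IntervalIntegrable (fun s : ℝ => (t - s) ^ (-α)) volume (t / 2) t := by
    have h := (intervalIntegral.intervalIntegrable_rpow' (a := t / 2) (b := 0)
      (r := -α) (by linarith)).comp_sub_left t
    have e : t - t / 2 = t / 2 := by ring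
    simpa [e] using h
  refine IntervalIntegrable.trans (b := t / 2) ?_ ?_
  · refine IntervalIntegrable.continuousOn_mul (hg.mono_set ?_) ?_
    · rw [uIcc_of_le (by linarith), uIcc_of_le (by linarith)]
      exact Icc_subset_Icc le_rfl (by linarith)
    · rw [uIcc_of_le (by linarith)]
      refine ContinuousOn.rpow_const (by fun_prop) ?_
      intro x hx
      left
      have := hx.2
      linarith
  · refine hk.mul_continuousOn (hgc.mono ?_)
    rw [uIcc_of_le (by linarith)]
    intro x hx
    exact ⟨by linarith [hx.1], by linarith [hx.2]⟩

lemma tfde_extremum {α t : ℝ} (hα : 0 < α) (hα1 : α < 1) (ht : 0 < t) (f f' : ℝ → ℝ)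
    (hc : ContinuousOn f (Icc 0 t)) (hd : ∀ s ∈ Ioc 0 t, HasDerivAt f (f' s) s)
    (hint : IntervalIntegrable (fun s => (t - s) ^ (-α) * f' s) volume 0 t)
    (hmax : ∀ s ∈ Icc 0 t, f s ≤ f t) :
    t ^ (-α) * (f t - f 0) ≤ ∫ s in (0:ℝ)..t, (t - s) ^ (-α) * f' s := by
  have key := intervalIntegral.sub_le_integral_of_hasDeriv_right_of_le
    (g := fun s => (t - s) ^ (-α) * (f s - f t))
    (g' := fun s => (α * (t - s) ^ (-α - 1)) * (f s - f t) + (t - s) ^ (-α) * f' s)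
    (φ := fun s => (t - s) ^ (-α) * f' s) ht.le ?_ ?_ ?_ ?_
  · simp only [sub_self, mul_zero, sub_zero] at key
    linarith
  · intro s hs
    rcases eq_or_lt_of_le hs.2 with h | h
    · subst h
      have h1 : ContinuousWithinAt (fun x => - (s - x) ^ (1 - α) * dslope f s x) (Icc 0 s) s := by
        refine ContinuousAt.continuousWithinAt ?_
        refine ContinuousAt.mul (ContinuousAt.neg ?_) ?_
        · exact ContinuousAt.rpow_const (by fun_prop) (Or.inr (by linarith))
        · exact continuousAt_dslope_same.2 (hd s ⟨ht, le_rfl⟩).differentiableAt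
      refine h1.congr ?_ ?_
      · intro x hx
        rcases eq_or_lt_of_le hx.2 with h | h
        · subst h
          simp [Real.zero_rpow (show 1 - α ≠ 0 by linarith)]
        · have e : f x - f s = (x - s) * dslope f s x := by
            have := sub_smul_dslope f s x
            simpa using this.symm
          have hp : 0 < s - x := by linarith
          rw [e, show 1 - α = -α + 1 by ring, Real.rpow_add_one hp.ne']
          ring
      · simp [Real.zero_rpow (show 1 - α ≠ 0 by linarith)]
    · refine ContinuousWithinAt.mul ?_ ((hc s hs).sub continuousWithinAt_const)
      exact (ContinuousAt.rpow_const (by fun_prop) (Or.inl (by linarith))).continuousWithinAt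
  · intro s hs
    have hp : t - s ≠ 0 := by linarith [hs.2]
    have h1 : HasDerivAt (fun x : ℝ => (t - x) ^ (-α)) (α * (t - s) ^ (-α - 1)) s := by
      have := ((hasDerivAt_id s).const_sub t).rpow_const (p := -α) (Or.inl hp)
      simpa using this
    have h2 := h1.mul ((hd s ⟨hs.1, hs.2.le⟩).sub_const (f t))
    exact h2.hasDerivWithinAt
  · rw [integrableOn_Icc_iff_integrableOn_Ioc]
    exact (intervalIntegrable_iff_integrableOn_Ioc_of_le ht.le).1 hint
  · intro s hs
    have h1 : 0 ≤ α * (t - s) ^ (-α - 1) :=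
      mul_nonneg hα.le (Real.rpow_nonneg (by linarith [hs.2]) _)
    have h2 := hmax s ⟨hs.1.le, hs.2.le⟩
    have := mul_nonneg h1 (sub_nonneg.2 h2)
    linarith

lemma tfde_beta {α t : ℝ} (hα : 0 < α) (hα1 : α < 1) (ht : 0 < t) :
    ∫ s in (0:ℝ)..t, (t - s) ^ (-α) * s ^ (α - 1) = Real.Gamma α * Real.Gamma (1 - α) := by
  have h := Complex.betaIntegral_scaled (α : ℂ) ((1 - α : ℝ) : ℂ) ht
  have hb := Complex.Gamma_mul_Gamma_eq_betaIntegral (s := (α : ℂ)) (t := ((1 - α : ℝ) : ℂ))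
    (by simpa using hα) (by simpa using hα1)
  have e : (α : ℂ) + ((1 - α : ℝ) : ℂ) = 1 := by push_cast; ring
  rw [e] at h hb
  rw [Complex.Gamma_one, one_mul] at hb
  rw [sub_self, Complex.cpow_zero, one_mul, ← hb, Complex.Gamma_ofReal, Complex.Gamma_ofReal] at h
  have h2 : ∫ x in (0:ℝ)..t, (x : ℂ) ^ ((α : ℂ) - 1) * ((t : ℂ) - x) ^ (((1 - α : ℝ) : ℂ) - 1)
      = ∫ x in (0:ℝ)..t, (((t - x) ^ (-α) * x ^ (α - 1) : ℝ) : ℂ) := by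
    apply intervalIntegral.integral_congr
    intro x hx
    rw [uIcc_of_le ht.le] at hx
    have e1 : (x : ℂ) ^ ((α : ℂ) - 1) = ((x ^ (α - 1) : ℝ) : ℂ) := by
      rw [Complex.ofReal_cpow hx.1]; push_cast; rfl
    have e2 : ((t : ℂ) - x) ^ (((1 - α : ℝ) : ℂ) - 1) = (((t - x) ^ (-α) : ℝ) : ℂ) := by
      rw [Complex.ofReal_cpow (by linarith [hx.2])]
      push_cast
      congr 1
      ring
    simp only
    rw [e1, e2]
    push_cast
    ring
  rw [h2, intervalIntegral.integral_ofReal] at h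
  exact_mod_cast h

lemma tfde_second_deriv {n : ℕ} (w : (Fin n → ℝ) → ℝ) (x e : Fin n → ℝ)
    (hw : ContDiffAt ℝ 2 w x) (hmax : IsLocalMax w x) :
    fderiv ℝ (fun y => fderiv ℝ w y e) x e ≤ 0 := by
  by_contra hcon
  push Not at hcon
  set L : ℝ → (Fin n → ℝ) := fun h => x + h • e with hL
  have hL0 : L 0 = x := by simp [hL]
  have hLd : ∀ h, HasDerivAt L e h := by
    intro h
    have := ((hasDerivAt_id h).smul_const e).const_add x
    simpa [hL] using this
  have hLc : Tendsto L (𝓝 0) (𝓝 x) := by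
    have := (hLd 0).continuousAt.tendsto
    rwa [hL0] at this
  have hev : ∀ᶠ y in 𝓝 x, DifferentiableAt ℝ w y := by
    filter_upwards [hw.eventually (by simp)] with y hy
    exact hy.differentiableAt (by simp)
  have hd1 : deriv (fun h => w (L h)) =ᶠ[𝓝 0] fun h => fderiv ℝ w (L h) e := by
    filter_upwards [hLc.eventually hev] with h hh
    exact (hh.hasFDerivAt.comp_hasDerivAt h (hLd h)).deriv
  have hd2 : DifferentiableAt ℝ (fun y => fderiv ℝ w y e) x := by
    have := (hw.fderiv_right (m := 1) (by norm_num)).differentiableAt (by simp)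
    exact this.clm_apply (differentiableAt_const e)
  have hdd : deriv (deriv (fun h => w (L h))) 0 = fderiv ℝ (fun y => fderiv ℝ w y e) x e := by
    rw [hd1.deriv_eq]
    have h3 : HasFDerivAt (fun y => fderiv ℝ w y e) (fderiv ℝ (fun y => fderiv ℝ w y e) x) (L 0) := by
      rw [hL0]; exact hd2.hasFDerivAt
    exact (h3.comp_hasDerivAt 0 (hLd 0)).deriv
  have hmx : IsLocalMax (fun h => w (L h)) 0 := by
    have := hLc.eventually hmax
    simpa [IsLocalMax, IsMaxFilter, hL0] using this
  have hmn : IsLocalMin (fun h => w (L h)) 0 := by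
    refine isLocalMin_of_deriv_deriv_pos (by rw [hdd]; exact hcon) hmx.deriv_eq_zero ?_
    have : ContinuousAt w (L 0) := by rw [hL0]; exact hw.continuousAt
    exact this.comp (hLd 0).continuousAt
  have hcst : (fun h => w (L h)) =ᶠ[𝓝 0] fun _ => w (L 0) := by
    filter_upwards [hmx, hmn] with h h1 h2
    exact le_antisymm h1 h2
  have h0 : deriv (deriv (fun h => w (L h))) 0 = 0 := by
    rw [hcst.deriv.deriv_eq]
    simp
  rw [hdd] at h0
  linarith

lemma tfde_div_term {n : ℕ} (p w : (Fin n → ℝ) → ℝ) (x e : Fin n → ℝ)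
    (hp : DifferentiableAt ℝ p x) (hw : ContDiffAt ℝ 2 w x) :
    DifferentiableAt ℝ (fun y => p y * fderiv ℝ w y e) x ∧
    fderiv ℝ (fun y => p y * fderiv ℝ w y e) x e =
      p x * fderiv ℝ (fun y => fderiv ℝ w y e) x e + fderiv ℝ w x e * fderiv ℝ p x e := by
  have hd2 : DifferentiableAt ℝ (fun y => fderiv ℝ w y e) x := by
    have := (hw.fderiv_right (m := 1) (by norm_num)).differentiableAt (by simp)
    exact this.clm_apply (differentiableAt_const e)
  refine ⟨hp.mul hd2, ?_⟩
  rw [fderiv_fun_mul hp hd2]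
  simp

lemma tfde_div_max {n : ℕ} (p u u' : (Fin n → ℝ) → ℝ) (x : Fin n → ℝ)
    (hp : DifferentiableAt ℝ p x) (hpx : 0 < p x)
    (hu : ContDiffAt ℝ 2 u x) (hu' : ContDiffAt ℝ 2 u' x)
    (hmax : IsLocalMax (fun y => u y - u' y) x) :
    divPGrad n p u x - divPGrad n p u' x ≤ 0 := by
  unfold divPGrad
  rw [← Finset.sum_sub_distrib]
  refine Finset.sum_nonpos fun j _ => ?_
  set e : Fin n → ℝ := Pi.single j 1
  have hw : ContDiffAt ℝ 2 (fun y => u y - u' y) x := hu.sub hu'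
  have h1 := tfde_div_term p u x e hp hu
  have h2 := tfde_div_term p u' x e hp hu'
  have h3 := tfde_div_term p _ x e hp hw
  have hev : ∀ {g : (Fin n → ℝ) → ℝ}, ContDiffAt ℝ 2 g x → ∀ᶠ y in 𝓝 x, DifferentiableAt ℝ g y := by
    intro g hg
    filter_upwards [hg.eventually (by simp)] with y hy
    exact hy.differentiableAt (by simp)
  have heq : (fun y => p y * fderiv ℝ (fun y => u y - u' y) y e) =ᶠ[𝓝 x]
      fun y => p y * fderiv ℝ u y e - p y * fderiv ℝ u' y e := by
    filter_upwards [hev hu, hev hu'] with y hy hy'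
    rw [fderiv_fun_sub hy hy']
    simp
    ring
  have h4 := heq.fderiv_eq (𝕜 := ℝ)
  rw [fderiv_fun_sub h1.1 h2.1] at h4
  have h5 := congrArg (fun A => A e) h4
  simp only [ContinuousLinearMap.sub_apply] at h5
  rw [← h5, h3.2, hmax.fderiv_eq_zero]
  have := tfde_second_deriv _ x e hw hmax
  simp only [ContinuousLinearMap.zero_apply, zero_mul, add_zero]
  exact mul_nonpos_of_nonneg_of_nonpos hpx.le this

lemma tfde_one_sided (n : ℕ) (α T : ℝ) (hα : 0 < α) (hα1 : α < 1)
    (G : Set (Fin n → ℝ)) (hG : IsOpen G) (hGb : Bornology.IsBounded G)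
    (p q : (Fin n → ℝ) → ℝ)
    (hp : ContDiffOn ℝ 1 p (closure G)) (hppos : ∀ x ∈ closure G, 0 < p x)
    (hqnn : ∀ x ∈ closure G, 0 ≤ q x)
    (F F' u u' : (Fin n → ℝ) → ℝ → ℝ)
    (hu : IsSolutionTFDE n α T G p q F u) (hu' : IsSolutionTFDE n α T G p q F' u')
    (ε M : ℝ) (hε : 0 ≤ ε) (hM : 0 ≤ M)
    (hFd : ∀ x ∈ closure G, ∀ t ∈ Set.Icc (0:ℝ) T, F x t - F' x t ≤ ε)
    (h0 : ∀ x ∈ closure G, u x 0 - u' x 0 ≤ M)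
    (hb : ∀ x ∈ frontier G, ∀ t ∈ Set.Icc (0:ℝ) T, u x t - u' x t ≤ M) :
    ∀ x ∈ closure G, ∀ t ∈ Set.Ico (0:ℝ) T,
      u x t - u' x t ≤ M + t ^ α / Real.Gamma (1 + α) * ε := by
  intro x₁ hx₁ t₁ ht₁
  by_contra hcon
  push Not at hcon
  obtain ⟨huc, hu2, hut, hueq⟩ := hu
  obtain ⟨huc', hu2', hut', hueq'⟩ := hu'
  have hΓ : 0 < Real.Gamma (1 + α) := Real.Gamma_pos_of_pos (by linarith)
  have hΓ1 : 0 < Real.Gamma (1 - α) := Real.Gamma_pos_of_pos (by linarith)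
  set C : ℝ := ε / Real.Gamma (1 + α) with hC
  have hC0 : 0 ≤ C := by positivity
  have hcompact : IsCompact (closure G ×ˢ Icc (0:ℝ) t₁) :=
    hGb.isCompact_closure.prod isCompact_Icc
  have hzc : ContinuousOn (fun z : (Fin n → ℝ) × ℝ => u z.1 z.2 - u' z.1 z.2 - C * z.2 ^ α)
      (closure G ×ˢ Icc (0:ℝ) T) := by
    refine (huc.sub huc').sub (continuousOn_const.mul ?_)
    exact ContinuousOn.rpow_const (by fun_prop) (fun _ _ => Or.inr hα.le)
  have hsub : closure G ×ˢ Icc (0:ℝ) t₁ ⊆ closure G ×ˢ Icc (0:ℝ) T :=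
    prod_mono subset_rfl (Icc_subset_Icc le_rfl ht₁.2.le)
  obtain ⟨⟨x, t⟩, ⟨hx, ht⟩, hmax⟩ := hcompact.exists_isMaxOn
    ⟨(x₁, t₁), hx₁, ht₁.1, le_rfl⟩ (hzc.mono hsub)
  simp only at hx ht
  have hmax' : ∀ y ∈ closure G, ∀ s ∈ Icc (0:ℝ) t₁,
      u y s - u' y s - C * s ^ α ≤ u x t - u' x t - C * t ^ α :=
    fun y hy s hs => hmax (show (y, s) ∈ closure G ×ˢ Icc (0:ℝ) t₁ from ⟨hy, hs⟩)
  have hbig : M < u x t - u' x t - C * t ^ α := by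
    have h1 := hmax' x₁ hx₁ t₁ ⟨ht₁.1, le_rfl⟩
    have e : t₁ ^ α / Real.Gamma (1 + α) * ε = C * t₁ ^ α := by rw [hC]; ring
    rw [e] at hcon
    linarith
  have hCt : 0 ≤ C * t ^ α := mul_nonneg hC0 (Real.rpow_nonneg ht.1 _)
  have htT : t < T := lt_of_le_of_lt ht.2 ht₁.2
  have htpos : 0 < t := by
    rcases eq_or_lt_of_le ht.1 with h | h
    · subst h
      have := h0 x hx
      linarith
    · exact h
  have hxG : x ∈ G := by
    by_contra hxG
    have hfr : x ∈ frontier G := by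
      rw [hG.frontier_eq]; exact ⟨hx, hxG⟩
    have := hb x hfr t ⟨ht.1, htT.le⟩
    linarith
  have hnG : G ∈ 𝓝 x := hG.mem_nhds hxG
  have hnc : closure G ∈ 𝓝 x := mem_of_superset hnG subset_closure
  -- spatial part
  have hdiv : divPGrad n p (fun y => u y t) x - divPGrad n p (fun y => u' y t) x ≤ 0 := by
    refine tfde_div_max p _ _ x ((hp.contDiffAt hnc).differentiableAt (by simp)) (hppos x hx)
      ((hu2 t ⟨htpos, htT⟩).contDiffAt hnG) ((hu2' t ⟨htpos, htT⟩).contDiffAt hnG) ?_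
    filter_upwards [hnc] with y hy
    have := hmax' y hy t ht
    linarith
  -- time part
  have hIoo : Ioo 0 T ⊆ Ioc 0 T := Ioo_subset_Ioc_self
  have hreg : ∀ f : ℝ → ℝ, ContDiffOn ℝ 1 f (Ioc 0 T) →
      ContinuousOn (deriv f) (Ioo 0 T) ∧ ∀ s ∈ Ioo 0 T, HasDerivAt f (deriv f s) s := by
    intro f hf
    have hf' := hf.mono hIoo
    refine ⟨hf'.continuousOn_deriv_of_isOpen isOpen_Ioo (by simp), fun s hs => ?_⟩
    exact ((hf'.contDiffAt (isOpen_Ioo.mem_nhds hs)).differentiableAt (by simp)).hasDerivAt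
  have hr := hreg _ (hut x hxG).1
  have hr' := hreg _ (hut' x hxG).1
  have hi := tfde_kernel_integrable hα1 htpos htT _ (hut x hxG).2 hr.1
  have hi' := tfde_kernel_integrable hα1 htpos htT _ (hut' x hxG).2 hr'.1
  have hip := tfde_kernel_integrable hα1 htpos htT (fun s : ℝ => s ^ (α - 1))
    (intervalIntegral.intervalIntegrable_rpow' (by linarith))
    (ContinuousOn.rpow_const (by fun_prop) (fun s hs => Or.inl hs.1.ne'))
  have hsplit : ∀ s, (t - s) ^ (-α) * (deriv (u x) s - deriv (u' x) s - C * (α * s ^ (α - 1))) =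
      (t - s) ^ (-α) * deriv (u x) s - (t - s) ^ (-α) * deriv (u' x) s
        - (C * α) * ((t - s) ^ (-α) * s ^ (α - 1)) := by
    intro s; ring
  have hiAll := (hi.sub hi').sub (hip.const_mul (C * α))
  have hext := tfde_extremum hα hα1 htpos (fun s => u x s - u' x s - C * s ^ α)
    (fun s => deriv (u x) s - deriv (u' x) s - C * (α * s ^ (α - 1))) ?_ ?_ ?_ ?_
  · simp_rw [hsplit] at hext
    rw [intervalIntegral.integral_sub (hi.sub hi') (hip.const_mul _),
      intervalIntegral.integral_sub hi hi', intervalIntegral.integral_const_mul,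
      tfde_beta hα hα1 htpos] at hext
    have hpos : 0 < t ^ (-α) * (u x t - u' x t - C * t ^ α - (u x 0 - u' x 0 - C * 0 ^ α)) := by
      refine mul_pos (Real.rpow_pos_of_pos htpos _) ?_
      rw [Real.zero_rpow hα.ne']
      have := h0 x hx
      linarith
    have he := hueq x hxG t ⟨htpos, htT⟩
    have he' := hueq' x hxG t ⟨htpos, htT⟩
    unfold caputo at he he'
    set I := ∫ s in (0:ℝ)..t, (t - s) ^ (-α) * deriv (u x) s
    set I' := ∫ s in (0:ℝ)..t, (t - s) ^ (-α) * deriv (u' x) s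
    have hG1 : Real.Gamma (1 + α) = α * Real.Gamma α := by
      rw [add_comm, Real.Gamma_add_one hα.ne']
    have hGa : 0 < Real.Gamma α := Real.Gamma_pos_of_pos hα
    have hCe : C * α * (Real.Gamma α * Real.Gamma (1 - α)) = ε * Real.Gamma (1 - α) := by
      rw [hC, hG1]; field_simp
    rw [hCe] at hext
    have hlt : ε * Real.Gamma (1 - α) < I - I' := by linarith
    have hlt2 : ε < 1 / Real.Gamma (1 - α) * I - 1 / Real.Gamma (1 - α) * I' := by
      rw [← mul_sub, one_div, inv_mul_eq_div, lt_div_iff₀ hΓ1]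
      exact hlt
    have hqw : 0 ≤ q x * (u x t - u' x t) := mul_nonneg (hqnn x hx) (by linarith)
    have hFF := hFd x hx t ⟨ht.1, htT.le⟩
    rw [mul_sub] at hqw
    linarith
  · have : ContinuousOn (fun s : ℝ => ((x, s) : (Fin n → ℝ) × ℝ)) (Icc 0 t) := by fun_prop
    exact hzc.comp this (fun s hs => ⟨hx, hs.1, hs.2.trans htT.le⟩)
  · intro s hs
    have hsT : s ∈ Ioo 0 T := ⟨hs.1, lt_of_le_of_lt hs.2 htT⟩
    exact ((hr.2 s hsT).sub (hr'.2 s hsT)).sub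
      ((Real.hasDerivAt_rpow_const (Or.inl hs.1.ne')).const_mul C)
  · simp_rw [hsplit]
    exact hiAll
  · intro s hs
    exact hmax' x hx s ⟨hs.1, hs.2.trans ht.2⟩

/-- Continuous dependence on the data: if `u` and `u'` solve the
time-fractional diffusion equation with sources `F`, `F'`, initial conditions `u₀`, `u₀'`
and boundary conditions `v`, `v'`, and the data differ by at most `ε`, `ε₀`, `ε₁`
respectively, then `|u − u'| ≤ max{ε₀, ε₁} + (T^α/Γ(1+α)) ε` on `Ḡ×[0,T]`. -/
theorem continuous_dependence_TFDE (n : ℕ) (α T : ℝ) (hα : 0 < α) (hα1 : α < 1) (hT : 0 < T)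
    (G : Set (Fin n → ℝ)) (hG : IsOpen G) (hGb : Bornology.IsBounded G)
    (p q : (Fin n → ℝ) → ℝ)
    (hp : ContDiffOn ℝ 1 p (closure G)) (hppos : ∀ x ∈ closure G, 0 < p x)
    (hq : ContinuousOn q (closure G)) (hqnn : ∀ x ∈ closure G, 0 ≤ q x)
    (F F' : (Fin n → ℝ) → ℝ → ℝ)
    (hF : ContinuousOn (fun z : (Fin n → ℝ) × ℝ => F z.1 z.2) (G ×ˢ Set.Ioo 0 T))
    (hF' : ContinuousOn (fun z : (Fin n → ℝ) × ℝ => F' z.1 z.2) (G ×ˢ Set.Ioo 0 T))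
    (u₀ u₀' : (Fin n → ℝ) → ℝ)
    (hu₀ : ContinuousOn u₀ (closure G)) (hu₀' : ContinuousOn u₀' (closure G))
    (v v' : (Fin n → ℝ) → ℝ → ℝ)
    (hv : ContinuousOn (fun z : (Fin n → ℝ) × ℝ => v z.1 z.2) (frontier G ×ˢ Set.Icc 0 T))
    (hv' : ContinuousOn (fun z : (Fin n → ℝ) × ℝ => v' z.1 z.2) (frontier G ×ˢ Set.Icc 0 T))
    (u u' : (Fin n → ℝ) → ℝ → ℝ)
    (hu : IsSolutionTFDE n α T G p q F u) (hu' : IsSolutionTFDE n α T G p q F' u')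
    (huic : ∀ x ∈ closure G, u x 0 = u₀ x) (hu'ic : ∀ x ∈ closure G, u' x 0 = u₀' x)
    (hubc : ∀ x ∈ frontier G, ∀ t ∈ Set.Icc (0:ℝ) T, u x t = v x t)
    (hu'bc : ∀ x ∈ frontier G, ∀ t ∈ Set.Icc (0:ℝ) T, u' x t = v' x t)
    (ε ε₀ ε₁ : ℝ)
    (hFd : ∀ x ∈ closure G, ∀ t ∈ Set.Icc (0:ℝ) T, |F x t - F' x t| ≤ ε)
    (hu₀d : ∀ x ∈ closure G, |u₀ x - u₀' x| ≤ ε₀)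
    (hvd : ∀ x ∈ frontier G, ∀ t ∈ Set.Icc (0:ℝ) T, |v x t - v' x t| ≤ ε₁) :
    ∀ x ∈ closure G, ∀ t ∈ Set.Icc (0:ℝ) T,
      |u x t - u' x t| ≤ max ε₀ ε₁ + T ^ α / Real.Gamma (1 + α) * ε := by

  intro x hx
  have hε : 0 ≤ ε := (abs_nonneg _).trans (hFd x hx 0 ⟨le_rfl, hT.le⟩)
  have hM : 0 ≤ max ε₀ ε₁ := ((abs_nonneg _).trans (hu₀d x hx)).trans (le_max_left _ _)
  have hΓ : 0 < Real.Gamma (1 + α) := Real.Gamma_pos_of_pos (by linarith)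
  have h1 := tfde_one_sided n α T hα hα1 G hG hGb p q hp hppos hqnn F F' u u' hu hu' ε
    (max ε₀ ε₁) hε hM (fun y hy s hs => (le_abs_self _).trans (hFd y hy s hs))
    (fun y hy => by
      rw [huic y hy, hu'ic y hy]
      exact ((le_abs_self _).trans (hu₀d y hy)).trans (le_max_left _ _))
    (fun y hy s hs => by
      rw [hubc y hy s hs, hu'bc y hy s hs]
      exact ((le_abs_self _).trans (hvd y hy s hs)).trans (le_max_right _ _)) x hx
  have h2 := tfde_one_sided n α T hα hα1 G hG hGb p q hp hppos hqnn F' F u' u hu' hu ε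
    (max ε₀ ε₁) hε hM
    (fun y hy s hs => by
      have h := (abs_le.1 (hFd y hy s hs)).1
      linarith)
    (fun y hy => by
      rw [huic y hy, hu'ic y hy]
      have h := (abs_le.1 (hu₀d y hy)).1
      linarith [le_max_left ε₀ ε₁])
    (fun y hy s hs => by
      rw [hubc y hy s hs, hu'bc y hy s hs]
      have h := (abs_le.1 (hvd y hy s hs)).1
      linarith [le_max_right ε₀ ε₁]) x hx
  have hIco : ∀ t ∈ Ico (0:ℝ) T,
      |u x t - u' x t| ≤ max ε₀ ε₁ + T ^ α / Real.Gamma (1 + α) * ε := by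
    intro t ht
    have hmono : t ^ α / Real.Gamma (1 + α) * ε ≤ T ^ α / Real.Gamma (1 + α) * ε := by
      have := Real.rpow_le_rpow ht.1 ht.2.le hα.le
      gcongr
    have a := h1 t ht
    have b := h2 t ht
    rw [abs_le]
    constructor <;> linarith
  have hcont : ContinuousOn (fun t => |u x t - u' x t|) (Icc 0 T) := by
    have hm : ContinuousOn (fun s : ℝ => ((x, s) : (Fin n → ℝ) × ℝ)) (Icc 0 T) := by fun_prop
    exact ((hu.1.comp hm (fun s hs => ⟨hx, hs⟩)).sub (hu'.1.comp hm (fun s hs => ⟨hx, hs⟩))).abs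
  intro t ht
  have hcl : t ∈ closure (Ico (0:ℝ) T) := by rwa [closure_Ico hT.ne]
  exact ((hcont t ht).mono Ico_subset_Icc_self).closure_le hcl continuousWithinAt_const hIco
end

section
/- (Uniqueness of the generalized solution) Suppose (F_k), (u_{0k}), (v_k) and (F̃_k), (ũ_{0k}), (ṽ_k) are two sequences of data converging uniformly (on Ḡ×[0,T], Ḡ, and S×[0,T] respectively) to the same limits F, u₀, v, and for each k there exist classical solutions u_k and ũ_k of the initial-boundary-value problems for the time-fractional diffusion equation with data (F_k, u_{0k}, v_k) and (F̃_k, ũ_{0k}, ṽ_k) respectively. If u_k → u and ũ_k → ũ uniformly on Ḡ×[0,T] for continuous functions u, ũ, then u = ũ on Ḡ×[0,T]. -/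
open MeasureTheory Set Filter Topology

theorem tfde_kernel_integrable_s5 {α T t : ℝ} (hα : 0 < α) (hα1 : α < 1) {f : ℝ → ℝ}
    (ht : t ∈ Set.Ioo (0:ℝ) T)
    (hf : ContDiffOn ℝ 1 f (Set.Ioc 0 T))
    (hi : IntervalIntegrable (deriv f) MeasureTheory.volume 0 T) :
    IntervalIntegrable (fun s => (t - s) ^ (-α) * deriv f s) MeasureTheory.volume 0 t := by
  have ht0 := ht.1
  have htT := ht.2
  have hdc : ContinuousOn (deriv f) (Set.Ioo 0 T) :=
    (hf.mono Set.Ioo_subset_Ioc_self).continuousOn_deriv_of_isOpen isOpen_Ioo le_rfl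
  have h1 : IntervalIntegrable (fun s => (t - s) ^ (-α) * deriv f s) volume 0 (t/2) := by
    apply IntervalIntegrable.continuousOn_mul
    · apply hi.mono_set
      rw [Set.uIcc_of_le (by linarith), Set.uIcc_of_le (by linarith)]
      exact Set.Icc_subset_Icc le_rfl (by linarith)
    · rw [Set.uIcc_of_le (by linarith)]
      apply ContinuousOn.rpow_const (by fun_prop)
      intro s hs
      left
      have := hs.2
      linarith
  have h2 : IntervalIntegrable (fun s => (t - s) ^ (-α) * deriv f s) volume (t/2) t := by
    apply IntervalIntegrable.mul_continuousOn
    · have h := (intervalIntegral.intervalIntegrable_rpow' (a := t - t/2) (b := t - t) (r := -α)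
        (by linarith)).comp_sub_left t
      simpa using h
    · rw [Set.uIcc_of_le (by linarith)]
      apply hdc.mono
      intro s hs
      exact ⟨by linarith [hs.1], by linarith [hs.2]⟩
  exact h1.trans h2

theorem tfde_caputo_ge {α T t : ℝ} (hα : 0 < α) (hα1 : α < 1) {f : ℝ → ℝ}
    (ht : t ∈ Set.Ioo (0:ℝ) T)
    (hfc : ContinuousOn f (Set.Icc 0 T))
    (hf : ContDiffOn ℝ 1 f (Set.Ioc 0 T))
    (hi : IntervalIntegrable (deriv f) MeasureTheory.volume 0 T)
    (hmax : ∀ s ∈ Set.Icc 0 t, f s ≤ f t) :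
    1 / Real.Gamma (1 - α) * (t ^ (-α) * (f t - f 0)) ≤ caputo α f t := by
  have ht0 := ht.1
  have htT := ht.2
  have hd : ∀ s ∈ Set.Ioo 0 T, HasDerivAt f (deriv f s) s := by
    intro s hs
    have : DifferentiableWithinAt ℝ f (Set.Ioc 0 T) s :=
      hf.differentiableOn (by norm_num) s (Set.Ioo_subset_Ioc_self hs)
    exact (this.differentiableAt (Ioc_mem_nhds hs.1 hs.2)).hasDerivAt
  have hint := tfde_kernel_integrable_s5 hα hα1 ht hf hi
  have key := intervalIntegral.integral_le_sub_of_hasDeriv_right_of_le (a := 0) (b := t)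
    (g := fun s => (t - s) ^ (-α) * (f t - f s))
    (g' := fun s => (-1 * (-α) * (t - s) ^ (-α - 1)) * (f t - f s) + (t - s) ^ (-α) * (0 - deriv f s))
    (φ := fun s => - ((t - s) ^ (-α) * deriv f s)) ht0.le ?_ ?_ ?_ ?_
  · simp only [intervalIntegral.integral_neg, sub_self, mul_zero, sub_zero, zero_sub] at key
    unfold caputo
    have : 0 < Real.Gamma (1 - α) := Real.Gamma_pos_of_pos (by linarith)
    apply mul_le_mul_of_nonneg_left _ (by positivity)
    linarith
  · intro s hs
    rcases eq_or_lt_of_le hs.2 with h | h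
    · subst h
      -- limit at the endpoint
      rw [ContinuousWithinAt]
      simp only [sub_self, mul_zero]
      have hO : (fun r => f r - f s) =O[𝓝 s] (fun r => r - s) := (hd s ht).isBigO_sub
      obtain ⟨C, hC⟩ := hO.bound
      have hlim : Tendsto (fun r => C * (s - r) ^ (1 - α)) (𝓝[Set.Icc 0 s] s) (𝓝 0) := by
        have : ContinuousAt (fun r => C * (s - r) ^ (1 - α)) s := by
          apply ContinuousAt.mul continuousAt_const
          apply ContinuousAt.rpow_const (by fun_prop)
          right; linarith
        have h3 := this.tendsto
        simp only [sub_self, Real.zero_rpow (by linarith : (1 - α) ≠ 0), mul_zero] at h3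
        exact h3.mono_left nhdsWithin_le_nhds
      apply squeeze_zero_norm' _ hlim
      filter_upwards [self_mem_nhdsWithin, nhdsWithin_le_nhds hC] with r hr hrC
      rcases eq_or_lt_of_le hr.2 with h | h
      · subst h
        simp [Real.zero_rpow (by linarith : (1 - α) ≠ 0)]
      · have hpos : 0 < s - r := by linarith
        have e : (s - r) ^ (1 - α) = (s - r) ^ (-α) * (s - r) := by
          rw [show (1 - α) = -α + 1 by ring, Real.rpow_add_one hpos.ne']
        rw [e, norm_mul, Real.norm_of_nonneg (Real.rpow_nonneg hpos.le _)]
        rw [Real.norm_eq_abs, Real.norm_eq_abs, abs_sub_comm, abs_sub_comm r s,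
          abs_of_pos hpos] at hrC
        rw [Real.norm_eq_abs]
        have := mul_le_mul_of_nonneg_left hrC (Real.rpow_nonneg hpos.le (-α))
        linarith
    · apply ContinuousWithinAt.mul
      · apply ContinuousWithinAt.rpow_const (by fun_prop)
        left; linarith
      · apply continuousWithinAt_const.sub
        exact (hfc s ⟨hs.1, by linarith⟩).mono (Set.Icc_subset_Icc le_rfl htT.le)
  · intro s hs
    have hpos : 0 < t - s := by linarith [hs.2]
    apply HasDerivAt.hasDerivWithinAt
    apply HasDerivAt.mul
    · have h1 : HasDerivAt (fun s => t - s) (-1) s := by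
        simpa using (hasDerivAt_id s).const_sub t
      exact h1.rpow_const (Or.inl hpos.ne')
    · exact (hasDerivAt_const s (f t)).sub (hd s ⟨hs.1, by linarith [hs.2]⟩)
  · rw [← intervalIntegrable_iff_integrableOn_Icc_of_le ht0.le]
    exact hint.neg
  · intro s hs
    have hpos : 0 < t - s := by linarith [hs.2]
    have h1 := hmax s ⟨hs.1.le, hs.2.le⟩
    have : 0 ≤ α * (t - s) ^ (-α - 1) * (f t - f s) :=
      mul_nonneg (mul_nonneg hα.le (Real.rpow_nonneg hpos.le _)) (by linarith)
    linarith

theorem tfde_divPGrad_nonpos {n : ℕ} {G : Set (Fin n → ℝ)} (hG : IsOpen G)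
    {p w : (Fin n → ℝ) → ℝ} (hp : ∀ x ∈ G, 0 < p x) (hw : DifferentiableOn ℝ w G)
    {x : Fin n → ℝ} (hx : x ∈ G) (hmax : ∀ y ∈ G, w y ≤ w x) :
    divPGrad n p w x ≤ 0 := by
  unfold divPGrad
  apply Finset.sum_nonpos
  intro j _
  by_contra hcon
  push Not at hcon
  set e : Fin n → ℝ := Pi.single j 1
  set ψ : (Fin n → ℝ) → ℝ := fun y => p y * fderiv ℝ w y e with hψ
  have hdiff : DifferentiableAt ℝ ψ x := by
    by_contra h
    rw [fderiv_zero_of_not_differentiableAt h] at hcon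
    simp at hcon
  have hloc : IsLocalMax w x := by
    filter_upwards [hG.mem_nhds hx] with y hy using hmax y hy
  have hψ0 : ψ x = 0 := by simp [hψ, hloc.fderiv_eq_zero]
  have hl : ∀ r : ℝ, HasDerivAt (fun r : ℝ => x + r • e) e r := by
    intro r
    simpa using ((hasDerivAt_id r).smul_const e).const_add x
  have hcomp : HasDerivAt (fun r : ℝ => ψ (x + r • e)) (fderiv ℝ ψ x e) 0 := by
    have h1 : HasFDerivAt ψ (fderiv ℝ ψ x) (x + (0:ℝ) • e) := by simpa using hdiff.hasFDerivAt
    exact h1.comp_hasDerivAt 0 (hl 0)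
  have hpos : ∀ᶠ r in 𝓝[>] (0:ℝ), 0 < ψ (x + r • e) := by
    have hs := hcomp.tendsto_slope.mono_left
      (nhdsWithin_mono (0:ℝ) (fun r (hr : r ∈ Set.Ioi (0:ℝ)) => (ne_of_gt hr : r ≠ 0)))
    filter_upwards [hs.eventually (lt_mem_nhds hcon), self_mem_nhdsWithin] with r hr hr0
    rw [slope_def_field] at hr
    simp only [zero_smul, add_zero, hψ0, sub_zero] at hr
    have hr0' : (0:ℝ) < r := hr0
    exact (div_pos_iff_of_pos_right hr0').1 hr
  have hmem : ∀ᶠ r in 𝓝[>] (0:ℝ), x + r • e ∈ G := by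
    apply nhdsWithin_le_nhds
    have : ContinuousAt (fun r : ℝ => x + r • e) 0 := (hl 0).continuousAt
    apply this.eventually
    simpa using hG.mem_nhds hx
  obtain ⟨δ, hδ, hδs⟩ := mem_nhdsGT_iff_exists_Ioo_subset.1 (hpos.and hmem)
  have hδ0 : (0:ℝ) < δ := hδ
  have hwd : ∀ r ∈ Set.Ico 0 δ,
      HasDerivAt (fun r : ℝ => w (x + r • e)) (fderiv ℝ w (x + r • e) e) r := by
    intro r hr
    have hrG : x + r • e ∈ G := by
      rcases eq_or_lt_of_le hr.1 with h | h
      · rw [← h]; simpa using hx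
      · exact (hδs ⟨h, hr.2⟩).2
    exact ((hw _ hrG).differentiableAt (hG.mem_nhds hrG)).hasFDerivAt.comp_hasDerivAt r (hl r)
  have hmono : StrictMonoOn (fun r : ℝ => w (x + r • e)) (Set.Icc 0 (δ/2)) := by
    apply strictMonoOn_of_deriv_pos (convex_Icc _ _)
    · intro r hr
      exact (hwd r ⟨hr.1, by linarith [hr.2]⟩).continuousAt.continuousWithinAt
    · intro r hr
      rw [interior_Icc] at hr
      have hr' : r ∈ Set.Ioo 0 δ := ⟨hr.1, by linarith [hr.2]⟩
      rw [(hwd r ⟨hr.1.le, hr'.2⟩).deriv]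
      obtain ⟨h1, h2⟩ := hδs hr'
      exact (pos_iff_pos_of_mul_pos h1).1 (hp _ h2)
  have h1 := hmono (Set.left_mem_Icc.2 (by linarith)) (Set.right_mem_Icc.2 (by linarith))
    (by linarith : (0:ℝ) < δ/2)
  have h2 := hmax (x + (δ/2) • e) (hδs ⟨by linarith, by linarith⟩).2
  simp only [zero_smul, add_zero] at h1
  linarith

theorem tfde_sub {n : ℕ} {α T : ℝ} (hα : 0 < α) (hα1 : α < 1)
    (hT0 : 0 < T)
    {G : Set (Fin n → ℝ)} (hG : IsOpen G) {p q : (Fin n → ℝ) → ℝ}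
    (hp : ContDiffOn ℝ 1 p (closure G))
    {F F' u u' : (Fin n → ℝ) → ℝ → ℝ}
    (h : IsSolutionTFDE n α T G p q F u) (h' : IsSolutionTFDE n α T G p q F' u') :
    IsSolutionTFDE n α T G p q (fun x t => F x t - F' x t) (fun x t => u x t - u' x t) := by
  obtain ⟨hc, hx2, ht1, he⟩ := h
  obtain ⟨hc', hx2', ht1', he'⟩ := h'
  have hdt : ∀ {u : (Fin n → ℝ) → ℝ → ℝ} {x}, ContDiffOn ℝ 1 (u x) (Set.Ioc 0 T) →
      ∀ s ∈ Set.Ioo 0 T, DifferentiableAt ℝ (u x) s := by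
    intro u x hu s hs
    exact (hu.differentiableOn (by norm_num) s (Set.Ioo_subset_Ioc_self hs)).differentiableAt
      (Ioc_mem_nhds hs.1 hs.2)
  have hder : ∀ x ∈ G, ∀ s ∈ Set.Ioo 0 T,
      deriv (fun t => u x t - u' x t) s = deriv (u x) s - deriv (u' x) s := by
    intro x hx s hs
    exact deriv_fun_sub (hdt (ht1 x hx).1 s hs) (hdt (ht1' x hx).1 s hs)
  refine ⟨hc.sub hc', fun t ht => (hx2 t ht).sub (hx2' t ht), fun x hx => ⟨(ht1 x hx).1.sub (ht1' x hx).1, ?_⟩, ?_⟩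
  · refine ((ht1 x hx).2.sub (ht1' x hx).2).congr_ae ?_
    have hTne : ∀ᵐ s ∂(volume : Measure ℝ), s ≠ T ∧ s ≠ 0 := by
      have h1 : ∀ᵐ s ∂(volume : Measure ℝ), s ≠ T := by simp [ae_iff]
      have h2 : ∀ᵐ s ∂(volume : Measure ℝ), s ≠ 0 := by simp [ae_iff]
      filter_upwards [h1, h2] with s a b using ⟨a, b⟩
    rw [Filter.EventuallyEq, ae_restrict_iff' measurableSet_uIoc]
    filter_upwards [hTne] with s hs hsm
    rcases le_total 0 T with hT | hT
    · rw [Set.uIoc_of_le hT] at hsm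
      exact (hder x hx s ⟨hsm.1, lt_of_le_of_ne hsm.2 hs.1⟩).symm
    · exact absurd hT (not_le.2 hT0)
  · intro x hx t ht
    have hcap : caputo α (fun t => u x t - u' x t) t = caputo α (u x) t - caputo α (u' x) t := by
      unfold caputo
      rw [← mul_sub, ← intervalIntegral.integral_sub
        (tfde_kernel_integrable_s5 hα hα1 ht (ht1 x hx).1 (ht1 x hx).2)
        (tfde_kernel_integrable_s5 hα hα1 ht (ht1' x hx).1 (ht1' x hx).2)]
      congr 1
      apply intervalIntegral.integral_congr_ae
      refine Filter.Eventually.of_forall fun s hs => ?_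
      rw [Set.uIoc_of_le ht.1.le] at hs
      rw [hder x hx s ⟨hs.1, hs.2.trans_lt ht.2⟩]
      ring
    have hpd : DifferentiableAt ℝ p x :=
      ((hp.mono subset_closure).differentiableOn (by norm_num) x hx).differentiableAt (hG.mem_nhds hx)
    have hdx : ∀ {w : (Fin n → ℝ) → ℝ}, ContDiffOn ℝ 2 w G → ∀ e, DifferentiableAt ℝ
        (fun y => p y * fderiv ℝ w y e) x := by
      intro w hw e
      apply hpd.mul
      have h1 : ContDiffOn ℝ 1 (fderiv ℝ w) G := hw.fderiv_of_isOpen hG (by norm_num)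
      have h2 : DifferentiableAt ℝ (fderiv ℝ w) x :=
        (h1.differentiableOn (by norm_num) x hx).differentiableAt (hG.mem_nhds hx)
      exact h2.clm_apply (differentiableAt_const e)
    have hdiv : divPGrad n p (fun y => u y t - u' y t) x =
        divPGrad n p (fun y => u y t) x - divPGrad n p (fun y => u' y t) x := by
      unfold divPGrad
      rw [← Finset.sum_sub_distrib]
      apply Finset.sum_congr rfl
      intro j _
      have hev : (fun y => p y * fderiv ℝ (fun y => u y t - u' y t) y (Pi.single j 1)) =ᶠ[𝓝 x]
          (fun y => p y * fderiv ℝ (fun y => u y t) y (Pi.single j 1) -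
            p y * fderiv ℝ (fun y => u' y t) y (Pi.single j 1)) := by
        filter_upwards [hG.mem_nhds hx] with y hy
        have h1 : DifferentiableAt ℝ (fun y => u y t) y :=
          ((hx2 t ht).differentiableOn (by norm_num) y hy).differentiableAt (hG.mem_nhds hy)
        have h2 : DifferentiableAt ℝ (fun y => u' y t) y :=
          ((hx2' t ht).differentiableOn (by norm_num) y hy).differentiableAt (hG.mem_nhds hy)
        rw [fderiv_fun_sub h1 h2]
        simp only [ContinuousLinearMap.sub_apply]
        ring
      rw [hev.fderiv_eq, fderiv_fun_sub (hdx (hx2 t ht) _) (hdx (hx2' t ht) _)]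
      rfl
    rw [hcap, hdiv, he x hx t ht, he' x hx t ht]
    ring

theorem tfde_max {n : ℕ} {α T : ℝ} (hα : 0 < α) (hα1 : α < 1)
    {G : Set (Fin n → ℝ)} (hG : IsOpen G) (hGb : Bornology.IsBounded G) {p q : (Fin n → ℝ) → ℝ}
    (hppos : ∀ x ∈ closure G, 0 < p x) (hqnn : ∀ x ∈ closure G, 0 ≤ q x)
    {F w : (Fin n → ℝ) → ℝ → ℝ} (h : IsSolutionTFDE n α T G p q F w)
    {ε : ℝ} (hε : 0 < ε)
    (hF : ∀ x ∈ closure G, ∀ t ∈ Set.Icc 0 T, F x t ≤ ε)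
    (h0 : ∀ x ∈ closure G, w x 0 ≤ ε)
    (hS : ∀ x ∈ frontier G, ∀ t ∈ Set.Icc 0 T, w x t ≤ ε) :
    ∀ x ∈ closure G, ∀ t ∈ Set.Ico 0 T,
      w x t ≤ ε * (1 + Real.Gamma (1 - α) * T ^ α) := by
  obtain ⟨hc, hx2, ht1, he⟩ := h
  intro x hx t ht
  have hT : 0 < T := ht.1.trans_lt ht.2
  have hΓ : 0 < Real.Gamma (1 - α) := Real.Gamma_pos_of_pos (by linarith)
  have hTα : 0 < T ^ α := Real.rpow_pos_of_pos hT α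
  have hcomp : IsCompact (closure G ×ˢ Set.Icc 0 t) :=
    hGb.isCompact_closure.prod isCompact_Icc
  obtain ⟨⟨x0, t0⟩, ⟨hx0, ht0⟩, hm⟩ := hcomp.exists_isMaxOn
    ⟨(x, t), hx, Set.right_mem_Icc.2 ht.1⟩
    (hc.mono (Set.prod_mono le_rfl (Set.Icc_subset_Icc le_rfl ht.2.le)))
  simp only at hx0 ht0
  have hm' : ∀ y ∈ closure G, ∀ s ∈ Set.Icc 0 t, w y s ≤ w x0 t0 :=
    fun y hy s hs => hm (Set.mk_mem_prod hy hs)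
  refine (hm' x hx t (Set.right_mem_Icc.2 ht.1)).trans ?_
  by_cases hle : w x0 t0 ≤ ε
  · have : 0 ≤ ε * (Real.Gamma (1 - α) * T ^ α) := by positivity
    linarith
  push Not at hle
  have ht0T : t0 < T := ht0.2.trans_lt ht.2
  have hx0G : x0 ∈ G := by
    by_contra hn
    have : x0 ∈ frontier G := by
      rw [hG.frontier_eq]; exact ⟨hx0, hn⟩
    exact absurd (hS x0 this t0 ⟨ht0.1, ht0T.le⟩) (not_le.2 hle)
  have ht0pos : 0 < t0 := by
    rcases eq_or_lt_of_le ht0.1 with h | h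
    · rw [← h] at hle
      exact absurd (h0 x0 hx0) (not_le.2 hle)
    · exact h
  have ht0m : t0 ∈ Set.Ioo 0 T := ⟨ht0pos, ht0T⟩
  have hwc : ContinuousOn (w x0) (Set.Icc 0 T) := by
    have : ContinuousOn (fun s : ℝ => (x0, s)) (Set.Icc 0 T) := by fun_prop
    exact hc.comp this (fun s hs => ⟨hx0, hs⟩)
  have hcap := tfde_caputo_ge hα hα1 ht0m hwc (ht1 x0 hx0G).1 (ht1 x0 hx0G).2
    (fun s hs => hm' x0 hx0 s ⟨hs.1, hs.2.trans ht0.2⟩)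
  have hdiv := tfde_divPGrad_nonpos hG (fun y hy => hppos y (subset_closure hy))
    ((hx2 t0 ht0m).differentiableOn (by norm_num)) hx0G
    (fun y hy => hm' y (subset_closure hy) t0 ht0)
  have heq := he x0 hx0G t0 ht0m
  have hq0 : 0 ≤ q x0 * w x0 t0 := mul_nonneg (hqnn x0 hx0) (by linarith)
  have hF0 := hF x0 hx0 t0 ⟨ht0.1, ht0T.le⟩
  have h1 : 1 / Real.Gamma (1 - α) * (t0 ^ (-α) * (w x0 t0 - w x0 0)) ≤ ε := by linarith
  have h00 := h0 x0 hx0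
  have htα : 0 < t0 ^ α := Real.rpow_pos_of_pos ht0pos α
  have h2 : w x0 t0 - w x0 0 ≤ ε * (Real.Gamma (1 - α) * t0 ^ α) := by
    rw [Real.rpow_neg ht0pos.le] at h1
    have e : 1 / Real.Gamma (1 - α) * ((t0 ^ α)⁻¹ * (w x0 t0 - w x0 0)) =
        (w x0 t0 - w x0 0) / (Real.Gamma (1 - α) * t0 ^ α) := by field_simp
    rw [e, div_le_iff₀ (by positivity)] at h1
    exact h1
  have h3 : t0 ^ α ≤ T ^ α := Real.rpow_le_rpow ht0pos.le ht0T.le hα.le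
  have h4 : ε * (Real.Gamma (1 - α) * t0 ^ α) ≤ ε * (Real.Gamma (1 - α) * T ^ α) := by gcongr
  linarith

/-- Uniqueness of the generalized solution: if two sequences of data
`(Fₖ, u₀ₖ, vₖ)` and `(Fₖ', u₀ₖ', vₖ')` converge uniformly (on `Ḡ×[0,T]`, `Ḡ` and
`S×[0,T]` respectively) to the same limits `(F, u₀, v)`, for each `k` there are classical
solutions `uₖ`, `uₖ'` of the corresponding initial-boundary-value problems, and
`uₖ → u`, `uₖ' → u'` uniformly on `Ḡ×[0,T]` with `u`, `u'` continuous, then `u = u'`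
on `Ḡ×[0,T]`. -/
theorem uniqueness_generalized_solution_TFDE (n : ℕ) (α T : ℝ)
    (hα : 0 < α) (hα1 : α < 1) (hT : 0 < T)
    (G : Set (Fin n → ℝ)) (hG : IsOpen G) (hGb : Bornology.IsBounded G)
    (p q : (Fin n → ℝ) → ℝ)
    (hp : ContDiffOn ℝ 1 p (closure G)) (hppos : ∀ x ∈ closure G, 0 < p x)
    (hq : ContinuousOn q (closure G)) (hqnn : ∀ x ∈ closure G, 0 ≤ q x)
    (F : (Fin n → ℝ) → ℝ → ℝ) (u₀ : (Fin n → ℝ) → ℝ) (v : (Fin n → ℝ) → ℝ → ℝ)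
    (Fk Fk' : ℕ → (Fin n → ℝ) → ℝ → ℝ)
    (u₀k u₀k' : ℕ → (Fin n → ℝ) → ℝ)
    (vk vk' : ℕ → (Fin n → ℝ) → ℝ → ℝ)
    (uk uk' : ℕ → (Fin n → ℝ) → ℝ → ℝ)
    (u u' : (Fin n → ℝ) → ℝ → ℝ)
    -- the data sequences converge uniformly to the common limits (F, u₀, v)
    (hFk : TendstoUniformlyOn (fun k (z : (Fin n → ℝ) × ℝ) => Fk k z.1 z.2)
      (fun z => F z.1 z.2) Filter.atTop (closure G ×ˢ Set.Icc 0 T))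
    (hFk' : TendstoUniformlyOn (fun k (z : (Fin n → ℝ) × ℝ) => Fk' k z.1 z.2)
      (fun z => F z.1 z.2) Filter.atTop (closure G ×ˢ Set.Icc 0 T))
    (hu₀k : TendstoUniformlyOn (fun k x => u₀k k x) u₀ Filter.atTop (closure G))
    (hu₀k' : TendstoUniformlyOn (fun k x => u₀k' k x) u₀ Filter.atTop (closure G))
    (hvk : TendstoUniformlyOn (fun k (z : (Fin n → ℝ) × ℝ) => vk k z.1 z.2)
      (fun z => v z.1 z.2) Filter.atTop (frontier G ×ˢ Set.Icc 0 T))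
    (hvk' : TendstoUniformlyOn (fun k (z : (Fin n → ℝ) × ℝ) => vk' k z.1 z.2)
      (fun z => v z.1 z.2) Filter.atTop (frontier G ×ˢ Set.Icc 0 T))
    -- for each k, uk k and uk' k are classical solutions with the respective data
    (huk : ∀ k, IsSolutionTFDE n α T G p q (Fk k) (uk k) ∧
      (∀ x ∈ closure G, uk k x 0 = u₀k k x) ∧
      (∀ x ∈ frontier G, ∀ t ∈ Set.Icc (0:ℝ) T, uk k x t = vk k x t))
    (huk' : ∀ k, IsSolutionTFDE n α T G p q (Fk' k) (uk' k) ∧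
      (∀ x ∈ closure G, uk' k x 0 = u₀k' k x) ∧
      (∀ x ∈ frontier G, ∀ t ∈ Set.Icc (0:ℝ) T, uk' k x t = vk' k x t))
    -- the solution sequences converge uniformly to u and u'
    (hcu : ContinuousOn (fun z : (Fin n → ℝ) × ℝ => u z.1 z.2) (closure G ×ˢ Set.Icc 0 T))
    (hcu' : ContinuousOn (fun z : (Fin n → ℝ) × ℝ => u' z.1 z.2) (closure G ×ˢ Set.Icc 0 T))
    (hulim : TendstoUniformlyOn (fun k (z : (Fin n → ℝ) × ℝ) => uk k z.1 z.2)
      (fun z => u z.1 z.2) Filter.atTop (closure G ×ˢ Set.Icc 0 T))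
    (hulim' : TendstoUniformlyOn (fun k (z : (Fin n → ℝ) × ℝ) => uk' k z.1 z.2)
      (fun z => u' z.1 z.2) Filter.atTop (closure G ×ˢ Set.Icc 0 T)) :
    ∀ x ∈ closure G, ∀ t ∈ Set.Icc (0:ℝ) T, u x t = u' x t := by
  have hIco : ∀ x ∈ closure G, ∀ t ∈ Set.Ico (0:ℝ) T, u x t = u' x t := by
    intro x hx t ht
    have htI : t ∈ Set.Icc 0 T := ⟨ht.1, ht.2.le⟩
    have hΓ : 0 < Real.Gamma (1 - α) := Real.Gamma_pos_of_pos (by linarith)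
    have hTα : 0 < T ^ α := Real.rpow_pos_of_pos hT α
    set C := 1 + Real.Gamma (1 - α) * T ^ α with hC
    have hCpos : 0 < C := by positivity
    have hbound : ∀ ε > 0, |u x t - u' x t| ≤ 2 * ε + 2 * ε * C := by
      intro ε hε
      rw [Metric.tendstoUniformlyOn_iff] at hFk hFk' hu₀k hu₀k' hvk hvk' hulim hulim'
      obtain ⟨k, ⟨⟨a1, a2⟩, a3, a4⟩, ⟨a5, a6⟩, a7, a8⟩ :=
        ((((hFk ε hε).and (hFk' ε hε)).and ((hu₀k ε hε).and (hu₀k' ε hε))).and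
        (((hvk ε hε).and (hvk' ε hε)).and ((hulim ε hε).and (hulim' ε hε)))).exists
      simp only [Real.dist_eq, abs_lt] at a1 a2 a3 a4 a5 a6 a7 a8
      obtain ⟨s1, i1, b1⟩ := huk k
      obtain ⟨s2, i2, b2⟩ := huk' k
      have d12 := tfde_sub hα hα1 hT hG hp s1 s2
      have d21 := tfde_sub hα hα1 hT hG hp s2 s1
      have m1 := tfde_max hα hα1 hG hGb hppos hqnn d12
        (ε := 2 * ε) (by linarith)
        (fun y hy s hs => by
          have := a1 (y, s) ⟨hy, hs⟩; have := a2 (y, s) ⟨hy, hs⟩; simp only at *; linarith)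
        (fun y hy => by
          have := a3 y hy; have := a4 y hy; simp only [i1 y hy, i2 y hy]; linarith)
        (fun y hy s hs => by
          have := a5 (y, s) ⟨hy, hs⟩; have := a6 (y, s) ⟨hy, hs⟩
          simp only [b1 y hy s hs, b2 y hy s hs] at *; linarith) x hx t ht
      have m2 := tfde_max hα hα1 hG hGb hppos hqnn d21
        (ε := 2 * ε) (by linarith)
        (fun y hy s hs => by
          have := a1 (y, s) ⟨hy, hs⟩; have := a2 (y, s) ⟨hy, hs⟩; simp only at *; linarith)
        (fun y hy => by
          have := a3 y hy; have := a4 y hy; simp only [i1 y hy, i2 y hy]; linarith)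
        (fun y hy s hs => by
          have := a5 (y, s) ⟨hy, hs⟩; have := a6 (y, s) ⟨hy, hs⟩
          simp only [b1 y hy s hs, b2 y hy s hs] at *; linarith) x hx t ht
      have c1 := a7 (x, t) ⟨hx, htI⟩
      have c2 := a8 (x, t) ⟨hx, htI⟩
      simp only at c1 c2 m1 m2
      rw [abs_le]
      constructor <;> linarith
    have hz : |u x t - u' x t| ≤ 0 := by
      apply le_of_forall_pos_le_add
      intro δ hδ
      have := hbound (δ / (2 + 2 * C)) (by positivity)
      have e : 2 * (δ / (2 + 2 * C)) + 2 * (δ / (2 + 2 * C)) * C = δ := by field_simp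
      linarith
    exact sub_eq_zero.1 (abs_nonpos_iff.1 hz)
  intro x hx
  have hmap : ContinuousOn (fun s : ℝ => (x, s)) (Set.Icc 0 T) := by fun_prop
  have c1 : ContinuousOn (u x) (Set.Icc 0 T) := hcu.comp hmap (fun s hs => ⟨hx, hs⟩)
  have c2 : ContinuousOn (u' x) (Set.Icc 0 T) := hcu'.comp hmap (fun s hs => ⟨hx, hs⟩)
  have heq : Set.EqOn (u x) (u' x) (Set.Ico 0 T) := fun t ht => hIco x hx t ht
  exact heq.of_subset_closure c1 c2 Set.Ico_subset_Icc_self (by rw [closure_Ico hT.ne])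
end

section
/- For 0<α<1 and λ ≥ 0, the function T(t) = E_α(−λ t^α) satisfies the fractional differential equation (D^α T)(t) + λ T(t) = 0 for all t ∈ (0,∞), together with T(0) = 1, where D^α is the Caputo fractional derivative. -/
open MeasureTheory Set Filter

/-- The two-parameter Mittag-Leffler function `E_{α,β}(z) = ∑_{k≥0} z^k/Γ(αk+β)`;
`E_α = E_{α,1}`. -/
noncomputable def ml (α β z : ℝ) : ℝ := ∑' k : ℕ, z ^ k / Real.Gamma (α * k + β)

lemma gamma_lower {x M : ℝ} (hx : 1 ≤ x) (hM : 0 < M) :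
    M ^ (x - 1) * Real.exp (-M) ≤ Real.Gamma x := by
  have hx0 : 0 < x := by linarith
  have hI := Real.GammaIntegral_convergent hx0
  have hsub : Ioi M ⊆ Ioi (0:ℝ) := Ioi_subset_Ioi hM.le
  rw [Real.Gamma_eq_integral hx0]
  calc M ^ (x - 1) * Real.exp (-M) = ∫ s in Ioi M, M ^ (x-1) * Real.exp (-s) := by
        rw [integral_const_mul, integral_exp_neg_Ioi]
    _ ≤ ∫ s in Ioi M, Real.exp (-s) * s ^ (x-1) := by
        apply setIntegral_mono_on
        · exact (integrableOn_exp_neg_Ioi M).const_mul _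
        · exact hI.mono_set hsub
        · exact measurableSet_Ioi
        · intro s hs
          rw [mul_comm]
          have : M ^ (x-1) ≤ s ^ (x-1) :=
            Real.rpow_le_rpow hM.le (le_of_lt hs) (by linarith)
          gcongr
    _ ≤ _ := by
        apply setIntegral_mono_set hI _ hsub.eventuallyLE
        filter_upwards [ae_restrict_mem measurableSet_Ioi] with s hs
        have : (0:ℝ) < s := hs
        simp only [Pi.zero_apply]
        positivity

lemma gpos {α : ℝ} (hα : 0 < α) (k : ℕ) : 0 < Real.Gamma (α * k + 1) :=
  Real.Gamma_pos_of_pos (by positivity)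

lemma ml_summable {α R : ℝ} (hα : 0 < α) (hR : 0 ≤ R) :
    Summable fun k : ℕ => R ^ k / Real.Gamma (α * k + 1) := by
  set M : ℝ := (2 * R + 1) ^ (α⁻¹) with hMdef
  have hM : 0 < M := by positivity
  have hMα : M ^ α = 2 * R + 1 := by
    rw [hMdef, ← Real.rpow_mul (by positivity), inv_mul_cancel₀ hα.ne', Real.rpow_one]
  have hr : R / (2 * R + 1) < 1 := by
    rw [div_lt_one (by positivity)]; linarith
  refine Summable.of_nonneg_of_le (fun k => div_nonneg (by positivity) (gpos hα k).le) ?_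
    ((summable_geometric_of_lt_one (by positivity) hr).mul_left (Real.exp M))
  intro k
  have h := gamma_lower (x := α * k + 1) (M := M)
    (by have : 0 ≤ α * k := by positivity
        linarith) hM
  rw [add_sub_cancel_right, Real.rpow_mul hM.le, hMα, Real.rpow_natCast] at h
  rw [div_le_iff₀ (gpos hα k)]
  calc R ^ k = Real.exp M * (R / (2 * R + 1)) ^ k * ((2 * R + 1) ^ k * Real.exp (-M)) := by
        rw [div_pow, Real.exp_neg]; field_simp
    _ ≤ _ := by gcongr

lemma nat_mul_pow_le {R : ℝ} (hR : 1 ≤ R) (k : ℕ) : (k:ℝ) * R ^ (k - 1) ≤ (2 * R) ^ k := by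
  rw [mul_pow]
  have h1 : (k:ℝ) ≤ 2 ^ k := by exact_mod_cast Nat.lt_two_pow_self.le
  have h2 : R ^ (k-1) ≤ R ^ k := pow_le_pow_right₀ hR (Nat.sub_le _ _)
  have : 0 ≤ R ^ (k-1) := by positivity
  gcongr

lemma ml_hasDerivAt {α : ℝ} (hα : 0 < α) (z : ℝ) :
    Summable (fun k : ℕ => ((k + 1 : ℕ) : ℝ) * z ^ k / Real.Gamma (α * (k + 1 : ℕ) + 1)) ∧
    HasDerivAt (fun z => ml α 1 z)
      (∑' k : ℕ, ((k + 1 : ℕ) : ℝ) * z ^ k / Real.Gamma (α * (k + 1 : ℕ) + 1)) z := by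
  set R : ℝ := |z| + 1 with hRdef
  have hR : 1 ≤ R := by have := abs_nonneg z; linarith
  have hu := ml_summable hα (R := 2 * R) (by linarith)
  have hb : ∀ (n : ℕ) (y : ℝ), y ∈ Metric.ball (0:ℝ) R →
      ‖(n:ℝ) * y ^ (n - 1) / Real.Gamma (α * n + 1)‖ ≤ (2 * R) ^ n / Real.Gamma (α * n + 1) := by
    intro n y hy
    have hy' : |y| ≤ R := by
      rw [mem_ball_zero_iff, Real.norm_eq_abs] at hy; exact hy.le
    rw [norm_div, norm_mul, norm_pow, Real.norm_of_nonneg (gpos hα n).le, Real.norm_eq_abs y,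
      Real.norm_of_nonneg (Nat.cast_nonneg n)]
    have hg := gpos hα n
    gcongr
    refine le_trans ?_ (nat_mul_pow_le hR n)
    gcongr
  have hz : z ∈ Metric.ball (0:ℝ) R := by
    rw [mem_ball_zero_iff, Real.norm_eq_abs]; linarith
  have hs : Summable (fun n : ℕ => (n:ℝ) * z ^ (n - 1) / Real.Gamma (α * n + 1)) :=
    Summable.of_norm_bounded hu (fun n => hb n z hz)
  have hd := hasDerivAt_tsum_of_isPreconnected (g := fun (n:ℕ) (y:ℝ) => y ^ n / Real.Gamma (α * n + 1))
    (g' := fun (n:ℕ) (y:ℝ) => (n:ℝ) * y ^ (n - 1) / Real.Gamma (α * n + 1))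
    hu Metric.isOpen_ball (convex_ball (0:ℝ) R).isPreconnected
    (fun n y _ => (hasDerivAt_pow n y).div_const _) hb
    (y₀ := 0) (Metric.mem_ball_self (by linarith)) (ml_summable hα le_rfl) hz
  have hs1 := (summable_nat_add_iff 1).2 hs
  rw [hs.tsum_eq_zero_add] at hd
  simp only [Nat.cast_zero, zero_mul, zero_div, zero_add, Nat.add_sub_cancel] at hd hs1
  exact ⟨hs1, hd⟩

lemma real_beta {α c t : ℝ} (hα1 : α < 1) (hc : 0 < c) (ht : 0 < t) :
    ∫ s in (0:ℝ)..t, (t - s) ^ (-α) * s ^ (c - 1) =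
      t ^ (c - α) * (Real.Gamma c * Real.Gamma (1 - α) / Real.Gamma (c + (1 - α))) := by
  have h := Complex.betaIntegral_scaled (c : ℂ) ((1 - α : ℝ) : ℂ) ht
  rw [Complex.betaIntegral_eq_Gamma_mul_div _ _ (by simpa using hc)
    (by rw [Complex.ofReal_re]; linarith)] at h
  have e : ∫ x in (0:ℝ)..t, (x:ℂ) ^ ((c:ℂ) - 1) * ((t:ℂ) - x) ^ (((1 - α : ℝ) : ℂ) - 1)
      = ∫ x in (0:ℝ)..t, (((t - x) ^ (-α) * x ^ (c - 1) : ℝ) : ℂ) := by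
    apply intervalIntegral.integral_congr
    intro x hx
    rw [uIcc_of_le ht.le] at hx
    simp only
    rw [Complex.ofReal_mul, Complex.ofReal_cpow hx.1, Complex.ofReal_cpow (by linarith [hx.2]),
      mul_comm]
    push_cast
    congr 2
    ring
  rw [e, intervalIntegral.integral_ofReal, ← Complex.ofReal_add, Complex.Gamma_ofReal,
    Complex.Gamma_ofReal, Complex.Gamma_ofReal] at h
  have e2 : (t:ℂ) ^ (((c + (1 - α) : ℝ) : ℂ) - 1) = ((t ^ (c - α) : ℝ) : ℂ) := by
    rw [Complex.ofReal_cpow ht.le]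
    congr 1
    push_cast
    ring
  rw [e2] at h
  exact_mod_cast h

lemma deriv_T {α : ℝ} (lam : ℝ) (hα : 0 < α) {s : ℝ} (hs : 0 < s) :
    HasSum (fun k : ℕ => (-lam) ^ (k+1) / Real.Gamma (α * (k + 1)) * s ^ (α * (k+1) - 1))
      (deriv (fun s => ml α 1 (-lam * s ^ α)) s) := by
  obtain ⟨h1, h2⟩ := ml_hasDerivAt hα (-lam * s ^ α)
  have h3 : HasDerivAt (fun s : ℝ => -lam * s ^ α) (-lam * (α * s ^ (α - 1))) s :=
    (Real.hasDerivAt_rpow_const (Or.inl hs.ne')).const_mul _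
  have h4 := (HasDerivAt.comp s h2 h3).deriv
  have h5 : deriv (fun s => ml α 1 (-lam * s ^ α)) s = _ := h4
  rw [h5]
  refine (h1.hasSum.mul_right _).congr_fun ?_
  intro k
  have hp : 0 < α * ((k:ℝ) + 1) := by positivity
  have hg : Real.Gamma (α * (k + 1)) ≠ 0 := (Real.Gamma_pos_of_pos hp).ne'
  push_cast
  rw [Real.Gamma_add_one hp.ne', mul_pow, ← Real.rpow_natCast (s ^ α) k, ← Real.rpow_mul hs.le,
    show α * ((k:ℝ)+1) - 1 = α * k + (α - 1) by ring, Real.rpow_add hs, pow_succ]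
  field_simp

/-- for `0<α<1` and `λ ≥ 0`, `T(t) = E_α(−λ t^α)` satisfies
`(D^α T)(t) + λ T(t) = 0` for all `t > 0`, and `T(0) = 1`. -/
theorem mittagLeffler_solves_fractional_ode (α lam : ℝ)
    (hα : 0 < α) (hα1 : α < 1) (hlam : 0 ≤ lam) :
    (∀ t : ℝ, 0 < t →
      caputo α (fun s => ml α 1 (-lam * s ^ α)) t + lam * ml α 1 (-lam * t ^ α) = 0) ∧
    ml α 1 (-lam * (0:ℝ) ^ α) = 1 := by
  constructor
  · intro t ht
    have hG : 0 < Real.Gamma (1 - α) := Real.Gamma_pos_of_pos (by linarith)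
    have hc : ∀ k : ℕ, 0 < α * ((k:ℝ) + 1) := fun k => by positivity
    have hGk : ∀ k : ℕ, 0 < Real.Gamma (α * ((k:ℝ) + 1)) := fun k => Real.Gamma_pos_of_pos (hc k)
    have hbeta : ∀ k : ℕ, ∫ s in (0:ℝ)..t, (t - s) ^ (-α) * s ^ (α * ((k:ℝ)+1) - 1) =
        (t ^ α) ^ k * (Real.Gamma (α * ((k:ℝ)+1)) * Real.Gamma (1 - α) / Real.Gamma (α * k + 1)) := by
      intro k
      rw [real_beta hα1 (hc k) ht, ← Real.rpow_natCast (t ^ α) k, ← Real.rpow_mul ht.le]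
      congr 3 <;> ring_nf
    have hIntv : ∀ k : ℕ, IntervalIntegrable
        (fun s => (t - s) ^ (-α) * s ^ (α * ((k:ℝ)+1) - 1)) volume 0 t := by
      intro k
      apply intervalIntegral.intervalIntegrable_of_integral_ne_zero
      rw [hbeta]
      have := hGk k
      have := gpos hα k
      positivity
    set F : ℕ → ℝ → ℝ := fun k s => (-lam) ^ (k+1) / Real.Gamma (α * (k + 1)) *
      ((t - s) ^ (-α) * s ^ (α * ((k:ℝ)+1) - 1)) with hF
    have hFint : ∀ k, Integrable (F k) (volume.restrict (Ioc 0 t)) := fun k =>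
      ((intervalIntegrable_iff_integrableOn_Ioc_of_le ht.le).1 (hIntv k)).const_mul _
    have hFval : ∀ k, ∫ s in Ioc 0 t, F k s =
        -lam * Real.Gamma (1 - α) * ((-lam * t ^ α) ^ k / Real.Gamma (α * k + 1)) := by
      intro k
      rw [integral_const_mul, ← intervalIntegral.integral_of_le ht.le, hbeta]
      have := (hGk k).ne'
      rw [mul_pow, pow_succ]
      field_simp
    have hFnorm : ∀ k, ∫ s in Ioc 0 t, ‖F k s‖ =
        lam * Real.Gamma (1 - α) * ((lam * t ^ α) ^ k / Real.Gamma (α * k + 1)) := by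
      intro k
      have : ∫ s in Ioc 0 t, ‖F k s‖ = ∫ s in Ioc 0 t, lam ^ (k+1) / Real.Gamma (α * (k + 1)) *
          ((t - s) ^ (-α) * s ^ (α * ((k:ℝ)+1) - 1)) := by
        apply setIntegral_congr_fun measurableSet_Ioc
        intro s hs
        have h1 : 0 ≤ (t - s) ^ (-α) := Real.rpow_nonneg (by linarith [hs.2]) _
        have h2 : 0 ≤ s ^ (α * ((k:ℝ)+1) - 1) := Real.rpow_nonneg hs.1.le _
        simp only [hF]
        rw [norm_mul, norm_div, norm_pow, norm_neg, Real.norm_of_nonneg hlam,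
          Real.norm_of_nonneg (hGk k).le, Real.norm_of_nonneg (mul_nonneg h1 h2)]
      rw [this, integral_const_mul, ← intervalIntegral.integral_of_le ht.le, hbeta]
      have := (hGk k).ne'
      rw [mul_pow, pow_succ]
      field_simp
    have hsum : Summable fun k => ∫ s in Ioc 0 t, ‖F k s‖ := by
      simp_rw [hFnorm]
      exact (ml_summable hα (by positivity)).mul_left _
    have key := hasSum_integral_of_summable_integral_norm hFint hsum
    have hI : ∫ s in (0:ℝ)..t, (t - s) ^ (-α) * deriv (fun s => ml α 1 (-lam * s ^ α)) s
        = ∫ s in Ioc 0 t, ∑' k, F k s := by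
      rw [intervalIntegral.integral_of_le ht.le]
      apply setIntegral_congr_fun measurableSet_Ioc
      intro s hs
      simp only [hF]
      rw [← (deriv_T lam hα hs.1).tsum_eq, ← tsum_mul_left]
      congr 1
      ext k
      ring
    rw [caputo, hI, ← key.tsum_eq]
    simp_rw [hFval]
    rw [tsum_mul_left, ml]
    field_simp
    ring
  · rw [Real.zero_rpow hα.ne', mul_zero, ml, tsum_eq_single 0]
    · simp
    · intro k hk
      simp [hk]
end

section
/- For every α with 0<α<1 and every β>0 there exists a constant M > 0 such that |E_{α,β}(−x)| ≤ M/(1+x) for all x ≥ 0. -/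
open Set Filter

open MeasureTheory

/-- Generalised series `∑ a_k z^k / Γ(αk+p)`. -/
noncomputable def mlS (α : ℝ) (a : ℕ → ℝ) (p z : ℝ) : ℝ :=
  ∑' k : ℕ, a k * z ^ k / Real.Gamma (α * k + p)

lemma gamma_lower_s9 (s R : ℝ) (hs : 1 ≤ s) (hR : 0 < R) :
    R ^ (s - 1) * Real.exp (-R) ≤ Real.Gamma s := by
  have hs0 : 0 < s := by linarith
  rw [Real.Gamma_eq_integral hs0]
  have hint := Real.GammaIntegral_convergent hs0
  have h1 : ∫ x in Ioi R, Real.exp (-x) * x ^ (s - 1) ≤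
      ∫ x in Ioi (0 : ℝ), Real.exp (-x) * x ^ (s - 1) := by
    apply setIntegral_mono_set hint
    · filter_upwards [ae_restrict_mem measurableSet_Ioi] with x hx
      have : (0 : ℝ) < x := hx
      simp only [Pi.zero_apply]
      positivity
    · exact (Ioi_subset_Ioi hR.le).eventuallyLE
  refine le_trans ?_ h1
  have h2 : ∫ x in Ioi R, Real.exp (-x) * R ^ (s - 1) ≤
      ∫ x in Ioi R, Real.exp (-x) * x ^ (s - 1) := by
    apply setIntegral_mono_on
    · exact (integrableOn_exp_neg_Ioi R).mul_const _
    · exact hint.mono_set (Ioi_subset_Ioi hR.le)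
    · exact measurableSet_Ioi
    · intro x hx
      have hx' : R < x := hx
      gcongr
  refine le_trans (le_of_eq ?_) h2
  rw [integral_mul_const, integral_exp_neg_Ioi, mul_comm]

lemma summable_aux (α : ℝ) (hα : 0 < α) (p : ℝ) (hp : 0 < p) (C : ℝ) (hC : 0 ≤ C) :
    Summable (fun k : ℕ => C ^ k / Real.Gamma (α * k + p)) := by
  obtain ⟨R, hR0, hR⟩ : ∃ R : ℝ, 0 < R ∧ R ^ α = 2 * C + 1 := by
    refine ⟨(2 * C + 1) ^ α⁻¹, by positivity, ?_⟩
    rw [← Real.rpow_mul (by positivity), inv_mul_cancel₀ hα.ne', Real.rpow_one]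
  have hgeo : Summable (fun k : ℕ => (Real.exp R * R ^ (1 - p)) * (1 / 2 : ℝ) ^ k) :=
    (summable_geometric_of_lt_one (by norm_num) (by norm_num)).mul_left _
  apply Summable.of_norm_bounded_eventually_nat hgeo
  have hev : ∀ᶠ k : ℕ in atTop, 1 ≤ α * k + p := by
    have : Tendsto (fun k : ℕ => α * (k : ℝ) + p) atTop atTop :=
      tendsto_atTop_add_const_right _ _
        (tendsto_natCast_atTop_atTop.const_mul_atTop hα)
    exact this.eventually_ge_atTop 1
  filter_upwards [hev] with k hk
  have h := gamma_lower_s9 _ R hk hR0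
  have hG : 0 < Real.Gamma (α * k + p) := Real.Gamma_pos_of_pos (by linarith)
  rw [Real.norm_of_nonneg (by positivity), div_le_iff₀ hG]
  have e1 : R ^ (α * k + p - 1) = (2 * C + 1) ^ k * R ^ (p - 1) := by
    rw [← hR, ← Real.rpow_natCast, ← Real.rpow_mul hR0.le, ← Real.rpow_add hR0]
    congr 1; ring
  have e2 : R ^ (1 - p) * R ^ (p - 1) = 1 := by
    rw [← Real.rpow_add hR0]; simp
  have e3 : Real.exp R * Real.exp (-R) = 1 := by rw [← Real.exp_add]; simp
  calc C ^ k ≤ (C + 1 / 2) ^ k := by gcongr; linarith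
    _ = (1 / 2 : ℝ) ^ k * (2 * C + 1) ^ k := by rw [← mul_pow]; congr 1; ring
    _ = (Real.exp R * R ^ (1 - p)) * (1 / 2 : ℝ) ^ k *
        (R ^ (α * k + p - 1) * Real.exp (-R)) := by
      rw [e1]
      linear_combination (-(1 / 2 : ℝ) ^ k * (2 * C + 1) ^ k) * e3 -
        ((1 / 2 : ℝ) ^ k * (2 * C + 1) ^ k * Real.exp R * Real.exp (-R)) * e2
    _ ≤ _ := by gcongr

/-- growth condition on coefficients -/
def Gr (a : ℕ → ℝ) : Prop := ∃ C : ℝ, 0 ≤ C ∧ ∀ k, |a k| ≤ C * 2 ^ k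

lemma summable_abs (α : ℝ) (hα : 0 < α) (p : ℝ) (hp : 0 < p) (a : ℕ → ℝ) (ha : Gr a) (z : ℝ) :
    Summable (fun k : ℕ => |a k| * |z| ^ k / Real.Gamma (α * k + p)) := by
  obtain ⟨C, hC0, hC⟩ := ha
  refine Summable.of_nonneg_of_le (fun k => ?_) (fun k => ?_)
    ((summable_aux α hα p hp (2 * |z|) (by positivity)).mul_left C)
  · have hG : 0 < Real.Gamma (α * k + p) := Real.Gamma_pos_of_pos (by positivity)
    positivity
  · have hG : 0 < Real.Gamma (α * k + p) := Real.Gamma_pos_of_pos (by positivity)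
    rw [mul_pow, ← mul_div_assoc, ← mul_assoc]
    gcongr
    exact hC k

lemma summable_mlS (α : ℝ) (hα : 0 < α) (p : ℝ) (hp : 0 < p) (a : ℕ → ℝ) (ha : Gr a) (z : ℝ) :
    Summable (fun k : ℕ => a k * z ^ k / Real.Gamma (α * k + p)) := by
  apply Summable.of_norm
  refine (summable_abs α hα p hp a ha z).congr (fun k => ?_)
  have hG : 0 < Real.Gamma (α * k + p) := Real.Gamma_pos_of_pos (by positivity)
  rw [Real.norm_eq_abs, abs_div, abs_mul, abs_pow, abs_of_pos hG]

lemma continuous_mlS (α : ℝ) (hα : 0 < α) (p : ℝ) (hp : 0 < p) (a : ℕ → ℝ) (ha : Gr a) :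
    Continuous (mlS α a p) := by
  have key : ∀ R : ℝ, 0 < R → ContinuousOn (mlS α a p) (Metric.ball 0 R) := by
    intro R hR
    unfold mlS
    refine continuousOn_tsum (fun k => by fun_prop) (summable_abs α hα p hp a ha R) ?_
    intro k x hx
    have hG : 0 < Real.Gamma (α * k + p) := Real.Gamma_pos_of_pos (by positivity)
    rw [Real.norm_eq_abs, abs_div, abs_mul, abs_pow, abs_of_pos hG, abs_of_pos hR]
    have : |x| < R := by simpa using hx
    gcongr
  rw [continuous_iff_continuousAt]
  intro x
  exact (key (|x| + 1) (by positivity)).continuousAt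
    (Metric.isOpen_ball.mem_nhds (by simp))

lemma beta_int (p q : ℝ) (hp : 0 < p) (hq : 0 < q) :
    IntegrableOn (fun s : ℝ => s ^ (p - 1) * (1 - s) ^ (q - 1)) (Ioo 0 1) ∧
    ∫ s in Ioo (0 : ℝ) 1, s ^ (p - 1) * (1 - s) ^ (q - 1) =
      Real.Gamma p * Real.Gamma q / Real.Gamma (p + q) := by
  have hc := Complex.betaIntegral_convergent (u := p) (v := q) (by simpa) (by simpa)
  rw [intervalIntegrable_iff_integrableOn_Ioo_of_le zero_le_one] at hc
  have heq : EqOn (fun s : ℝ => (s : ℂ) ^ ((p : ℂ) - 1) * (1 - (s : ℂ)) ^ ((q : ℂ) - 1))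
      (fun s : ℝ => ((s ^ (p - 1) * (1 - s) ^ (q - 1) : ℝ) : ℂ)) (Ioo 0 1) := by
    intro s hs
    have h1 : 0 ≤ 1 - s := by linarith [hs.2]
    simp only
    push_cast
    rw [Complex.ofReal_cpow hs.1.le, Complex.ofReal_cpow h1]
    push_cast; rfl
  have hc2 := hc.congr_fun heq measurableSet_Ioo
  refine ⟨?_, ?_⟩
  · have := hc2.re
    simpa [IntegrableOn] using this
  · have h := Complex.betaIntegral_eq_Gamma_mul_div p q (by simpa) (by simpa)
    rw [Complex.betaIntegral, intervalIntegral.integral_of_le zero_le_one,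
      integral_Ioc_eq_integral_Ioo, setIntegral_congr_fun measurableSet_Ioo heq,
      integral_complex_ofReal, Complex.Gamma_ofReal, Complex.Gamma_ofReal, ← Complex.ofReal_add,
      Complex.Gamma_ofReal] at h
    exact_mod_cast h

lemma conv_mlS (α : ℝ) (hα : 0 < α) (p q : ℝ) (hp : 0 < p) (hq : 0 < q) (a b : ℕ → ℝ)
    (ha : Gr a) (hb : Gr b) (z : ℝ) :
    ∫ s in Ioo (0 : ℝ) 1, s ^ (p - 1) * (1 - s) ^ (q - 1) *
      (mlS α a p (z * s ^ α) * mlS α b q (z * (1 - s) ^ α)) =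
    mlS α (fun n => ∑ ij ∈ Finset.HasAntidiagonal.antidiagonal n, a ij.1 * b ij.2) (p + q) z := by
  set F : ℕ × ℕ → ℝ → ℝ := fun ij s => s ^ (p - 1) * (1 - s) ^ (q - 1) *
    ((a ij.1 * (z * s ^ α) ^ ij.1 / Real.Gamma (α * ij.1 + p)) *
     (b ij.2 * (z * (1 - s) ^ α) ^ ij.2 / Real.Gamma (α * ij.2 + q))) with hF
  have hGp : ∀ i : ℕ, 0 < Real.Gamma (α * i + p) :=
    fun i => Real.Gamma_pos_of_pos (by positivity)
  have hGq : ∀ i : ℕ, 0 < Real.Gamma (α * i + q) :=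
    fun i => Real.Gamma_pos_of_pos (by positivity)
  -- pointwise form
  have hFeq : ∀ ij : ℕ × ℕ, EqOn (F ij) (fun s => (a ij.1 * b ij.2 * z ^ (ij.1 + ij.2) /
      (Real.Gamma (α * ij.1 + p) * Real.Gamma (α * ij.2 + q))) *
      (s ^ ((α * ij.1 + p) - 1) * (1 - s) ^ ((α * ij.2 + q) - 1))) (Ioo 0 1) := by
    intro ij s hs
    have h0 : 0 < s := hs.1
    have h1 : 0 < 1 - s := by linarith [hs.2]
    have e1 : s ^ ((α * ij.1 + p) - 1) = s ^ (p - 1) * (s ^ α) ^ ij.1 := by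
      rw [← Real.rpow_natCast, ← Real.rpow_mul h0.le, ← Real.rpow_add h0]; congr 1; ring
    have e2 : (1 - s) ^ ((α * ij.2 + q) - 1) = (1 - s) ^ (q - 1) * ((1 - s) ^ α) ^ ij.2 := by
      rw [← Real.rpow_natCast, ← Real.rpow_mul h1.le, ← Real.rpow_add h1]; congr 1; ring
    simp only [hF, e1, e2, mul_pow, pow_add]
    ring
  have hFint : ∀ ij, Integrable (F ij) (volume.restrict (Ioo 0 1)) := by
    intro ij
    have := (beta_int (α * ij.1 + p) (α * ij.2 + q) (by positivity) (by positivity)).1.const_mul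
      (a ij.1 * b ij.2 * z ^ (ij.1 + ij.2) /
      (Real.Gamma (α * ij.1 + p) * Real.Gamma (α * ij.2 + q)))
    exact IntegrableOn.congr_fun this (hFeq ij).symm measurableSet_Ioo
  have hval : ∀ ij, ∫ s in Ioo (0 : ℝ) 1, F ij s =
      a ij.1 * b ij.2 * z ^ (ij.1 + ij.2) / Real.Gamma (α * (ij.1 + ij.2 : ℕ) + (p + q)) := by
    intro ij
    rw [setIntegral_congr_fun measurableSet_Ioo (hFeq ij), integral_const_mul,
      (beta_int (α * ij.1 + p) (α * ij.2 + q) (by positivity) (by positivity)).2]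
    have := (hGp ij.1).ne'
    have := (hGq ij.2).ne'
    have e : α * ij.1 + p + (α * ij.2 + q) = α * (ij.1 + ij.2 : ℕ) + (p + q) := by
      push_cast; ring
    rw [e]
    field_simp
  have hbeta := beta_int p q hp hq
  have hsumA := summable_abs α hα p hp a ha z
  have hsumB := summable_abs α hα q hq b hb z
  have hAB := hsumA.mul_of_nonneg hsumB
    (fun i => by have := hGp i; simp only [Pi.zero_apply]; positivity)
    (fun i => by have := hGq i; simp only [Pi.zero_apply]; positivity)
  have hFsum : Summable fun ij => ∫ s in Ioo (0 : ℝ) 1, ‖F ij s‖ := by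
    refine Summable.of_nonneg_of_le (fun ij => integral_nonneg fun s => norm_nonneg _)
      (fun ij => ?_) (hAB.mul_right (∫ s in Ioo (0 : ℝ) 1, s ^ (p - 1) * (1 - s) ^ (q - 1)))
    rw [← integral_const_mul]
    refine setIntegral_mono_on (hFint ij).norm (hbeta.1.const_mul _) measurableSet_Ioo ?_
    intro s hs
    have h0 : 0 < s := hs.1
    have h1 : 0 < 1 - s := by linarith [hs.2]
    have := hGp ij.1
    have := hGq ij.2
    simp only [hF, norm_mul, norm_div, norm_pow, Real.norm_eq_abs]
    rw [abs_of_pos (Real.rpow_pos_of_pos h0 _), abs_of_pos (Real.rpow_pos_of_pos h1 _),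
      abs_of_pos (Real.rpow_pos_of_pos h0 _), abs_of_pos (Real.rpow_pos_of_pos h1 _),
      abs_of_pos (hGp ij.1), abs_of_pos (hGq ij.2), mul_comm]
    have l1 : s ^ α ≤ 1 := Real.rpow_le_one h0.le hs.2.le hα.le
    have l2 : (1 - s) ^ α ≤ 1 := Real.rpow_le_one h1.le (by linarith) hα.le
    have l3 : |z| * s ^ α ≤ |z| := mul_le_of_le_one_right (abs_nonneg _) l1
    have l4 : |z| * (1 - s) ^ α ≤ |z| := mul_le_of_le_one_right (abs_nonneg _) l2
    gcongr
  have hH := hasSum_integral_of_summable_integral_norm hFint hFsum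
  have hpt : ∫ s in Ioo (0 : ℝ) 1, (∑' ij, F ij s) =
      ∫ s in Ioo (0 : ℝ) 1, s ^ (p - 1) * (1 - s) ^ (q - 1) *
      (mlS α a p (z * s ^ α) * mlS α b q (z * (1 - s) ^ α)) := by
    refine integral_congr_ae (Eventually.of_forall fun s => ?_)
    simp only [hF]
    rw [tsum_mul_left]
    congr 1
    unfold mlS
    rw [tsum_mul_tsum_of_summable_norm
      (summable_mlS α hα p hp a ha _).norm (summable_mlS α hα q hq b hb _).norm]
  rw [← hpt]
  have hH2 := hH
  simp only [hval] at hH2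
  rw [← hH2.tsum_eq]
  unfold mlS
  rw [← Finset.HasAntidiagonal.sigmaAntidiagonalEquivProd.tsum_eq]
  have hs := Finset.HasAntidiagonal.sigmaAntidiagonalEquivProd.summable_iff.mpr hH2.summable
  simp only [Function.comp_def] at hs
  rw [Summable.tsum_sigma' (fun n => (hasSum_fintype _).summable) hs]
  refine tsum_congr fun n => ?_
  rw [tsum_fintype, Finset.sum_mul, Finset.sum_div]
  rw [← Finset.sum_coe_sort (Finset.HasAntidiagonal.antidiagonal n)]
  refine Finset.sum_congr rfl fun ij _ => ?_
  have := Finset.HasAntidiagonal.mem_antidiagonal.mp ij.2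
  simp [this]

/-- Prabhakar-type functions. -/
noncomputable def cc (m k : ℕ) : ℝ := ((k + m).choose m : ℝ)

lemma Gr_cc (m : ℕ) : Gr (cc m) := by
  refine ⟨2 ^ m, by positivity, fun k => ?_⟩
  unfold cc
  rw [abs_of_nonneg (by positivity), ← pow_add, add_comm m k]
  exact_mod_cast Nat.choose_le_two_pow _ _

def dd (k : ℕ) : ℝ := if k = 0 then 1 else 0

lemma Gr_dd : Gr dd := by
  refine ⟨1, by norm_num, fun k => ?_⟩
  unfold dd
  split_ifs
  · subst_vars; simp
  · simp

lemma mlS_dd (α p z : ℝ) : mlS α dd p z = 1 / Real.Gamma p := by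
  unfold mlS
  rw [tsum_eq_single 0]
  · simp [dd]
  · intro k hk; simp [dd, hk]

lemma conv_cc (m n : ℕ) :
    ∑ ij ∈ Finset.HasAntidiagonal.antidiagonal n, cc 0 ij.1 * cc m ij.2 = cc (m + 1) n := by
  have h : ∀ ij : ℕ × ℕ, cc 0 ij.1 * cc m ij.2 = cc m ij.2 := by intro ij; simp [cc]
  simp only [h]
  rw [← Finset.Nat.sum_antidiagonal_swap]
  simp only [Prod.snd_swap]
  rw [Finset.Nat.sum_antidiagonal_eq_sum_range_succ (fun i j => cc m i) n]
  unfold cc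
  rw [← Nat.cast_sum, Nat.sum_range_add_choose]
  ring_nf

lemma conv_dd (a : ℕ → ℝ) (n : ℕ) :
    ∑ ij ∈ Finset.HasAntidiagonal.antidiagonal n, a ij.1 * dd ij.2 = a n := by
  rw [Finset.sum_eq_single (n, 0)]
  · simp [dd]
  · rintro ⟨i, j⟩ hij hne
    have h := Finset.HasAntidiagonal.mem_antidiagonal.mp hij
    have : j ≠ 0 := by
      rintro rfl
      apply hne
      simp at h
      simp [h]
    simp [dd, this]
  · intro h; simp at h

lemma hasSum_shift (α : ℝ) (hα : 0 < α) (p : ℝ) (hp : 0 < p) (a : ℕ → ℝ) (ha : Gr a) (z : ℝ) :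
    HasSum (fun k : ℕ => (if k = 0 then 0 else a (k - 1)) * z ^ k / Real.Gamma (α * k + p))
      (z * mlS α a (p + α) z) := by
  rw [← hasSum_nat_add_iff' 1]
  have h := (summable_mlS α hα (p + α) (by positivity) a ha z).hasSum.mul_left z
  simp only [Finset.range_one, Finset.sum_singleton, if_true, zero_mul, zero_div, sub_zero]
  have e : (fun k : ℕ => (if k + 1 = 0 then 0 else a (k + 1 - 1)) * z ^ (k + 1) /
      Real.Gamma (α * (k + 1 : ℕ) + p)) =
      fun k : ℕ => z * (a k * z ^ k / Real.Gamma (α * k + (p + α))) := by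
    funext k
    have e2 : α * ((k + 1 : ℕ) : ℝ) + p = α * k + (p + α) := by push_cast; ring
    rw [e2, if_neg (Nat.succ_ne_zero k), Nat.add_sub_cancel]
    ring
  rw [e]
  exact h

lemma hasSum_P (α : ℝ) (hα : 0 < α) (p : ℝ) (hp : 0 < p) (m : ℕ) (z : ℝ) :
    HasSum (fun k : ℕ => cc m k * z ^ k / Real.Gamma (α * k + p)) (mlS α (cc m) p z) :=
  (summable_mlS α hα p hp _ (Gr_cc m) z).hasSum

lemma rec_zero (α : ℝ) (hα : 0 < α) (p : ℝ) (hp : 0 < p) (z : ℝ) :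
    mlS α (cc 0) p z = 1 / Real.Gamma p + z * mlS α (cc 0) (p + α) z := by
  have h1 := (summable_mlS α hα p hp dd Gr_dd z).hasSum
  have h1' : HasSum (fun k : ℕ => dd k * z ^ k / Real.Gamma (α * k + p)) (1 / Real.Gamma p) := by
    rw [← mlS_dd α p z]; exact h1
  have h2 := h1'.add (hasSum_shift α hα p hp _ (Gr_cc 0) z)
  refine (hasSum_P α hα p hp 0 z).unique ?_
  convert h2 using 2 with k
  rcases k with _ | k <;> simp [cc, dd]

lemma rec_succ (α : ℝ) (hα : 0 < α) (p : ℝ) (hp : 0 < p) (m : ℕ) (z : ℝ) :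
    mlS α (cc (m + 1)) p z = mlS α (cc m) p z + z * mlS α (cc (m + 1)) (p + α) z := by
  have h2 := (hasSum_P α hα p hp m z).add (hasSum_shift α hα p hp _ (Gr_cc (m + 1)) z)
  refine (hasSum_P α hα p hp (m + 1) z).unique ?_
  convert h2 using 2 with k
  rcases k with _ | k
  · simp [cc]
  · have : cc (m + 1) (k + 1) = cc m (k + 1) + cc (m + 1) k := by
      unfold cc
      have e : k + 1 + (m + 1) = (k + m + 1) + 1 := by ring
      rw [e, Nat.choose_succ_succ]
      push_cast
      congr 3; ring
    simp only [this, Nat.succ_ne_zero, if_false, Nat.add_sub_cancel]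
    ring

lemma rec_desc (α : ℝ) (hα : 0 < α) (p : ℝ) (hp : 0 < p) (m : ℕ) (z : ℝ) :
    mlS α (cc m) p z = p * mlS α (cc m) (p + 1) z +
      α * (m + 1) * (z * mlS α (cc (m + 1)) (p + 1 + α) z) := by
  have h2 := ((hasSum_P α hα (p + 1) (by linarith) m z).mul_left p).add
    ((hasSum_shift α hα (p + 1) (by linarith) _ (Gr_cc (m + 1)) z).mul_left (α * (m + 1)))
  refine (hasSum_P α hα p hp m z).unique ?_
  refine Eq.mp (congrArg (fun f => HasSum f _) (funext fun k => Eq.symm ?_)) h2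
  have hpos : 0 < α * k + p := by positivity
  have hG : Real.Gamma (α * k + (p + 1)) = (α * k + p) * Real.Gamma (α * k + p) := by
    rw [← add_assoc, Real.Gamma_add_one hpos.ne']
  have hG0 := (Real.Gamma_pos_of_pos hpos).ne'
  have hk : α * (m + 1) * (if k = 0 then 0 else cc (m + 1) (k - 1)) = α * k * cc m k := by
    rcases k with _ | k
    · simp
    · simp only [Nat.succ_ne_zero, if_false, Nat.add_sub_cancel]
      have : ((m + 1 : ℕ) : ℝ) * cc (m + 1) k = ((k + 1 : ℕ) : ℝ) * cc m (k + 1) := by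
        unfold cc
        have := Nat.choose_succ_right_eq (k + (m + 1)) m
        have e : k + (m + 1) - m = k + 1 := by omega
        rw [e] at this
        have e' : k + 1 + m = k + (m + 1) := by ring
        rw [e']
        norm_cast
        linarith
      push_cast at this ⊢
      linear_combination α * this
  rw [hG]
  have hne := hpos.ne'
  have : α * (m + 1) * ((if k = 0 then 0 else cc (m + 1) (k - 1)) * z ^ k /
      ((α * k + p) * Real.Gamma (α * k + p))) = α * k * cc m k * z ^ k /
      ((α * k + p) * Real.Gamma (α * k + p)) := by
    rw [← hk]; ring
  rw [this]
  field_simp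
  ring

/-- `e(t) = E_{α,α}(-t^α)`. -/
noncomputable def ee (α t : ℝ) : ℝ := mlS α (cc 0) α (-(t ^ α))

lemma ee_cont (α : ℝ) (hα : 0 < α) : Continuous (ee α) := by
  unfold ee
  exact (continuous_mlS α hα α hα _ (Gr_cc 0)).comp
    (Real.continuous_rpow_const hα.le).neg

lemma ee_zero (α : ℝ) (hα : 0 < α) : ee α 0 = 1 / Real.Gamma α := by
  unfold ee
  rw [Real.zero_rpow hα.ne', neg_zero, rec_zero α hα α hα]
  simp

lemma kernel_scale (α t s : ℝ) (ht : 0 < t) (h0 : 0 ≤ s) (h1 : s ≤ t) :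
    (s / t) ^ (α - 1) * (1 - s / t) ^ (α - 1) =
      t ^ (2 - 2 * α) * (s ^ (α - 1) * (t - s) ^ (α - 1)) := by
  have e : 1 - s / t = (t - s) / t := by field_simp
  rw [e, Real.div_rpow h0 ht.le, Real.div_rpow (by linarith) ht.le]
  have e2 : t ^ (2 - 2 * α) = (t ^ (α - 1))⁻¹ * (t ^ (α - 1))⁻¹ := by
    rw [← Real.rpow_neg ht.le, ← Real.rpow_add ht]; congr 1; ring
  rw [e2]
  ring

lemma kernel_int (α : ℝ) (hα : 0 < α) (t : ℝ) (ht : 0 < t) :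
    IntervalIntegrable (fun s => s ^ (α - 1) * (t - s) ^ (α - 1) * ee α s) volume 0 t := by
  have h := (beta_int α α hα hα).1
  rw [← intervalIntegrable_iff_integrableOn_Ioo_of_le zero_le_one] at h
  have h2 := IntervalIntegrable.comp_mul_right h (c := t⁻¹)
  simp only [zero_div, one_div, inv_inv, ← div_eq_mul_inv] at h2
  have h3 := (h2.const_mul (t ^ (2 - 2 * α))⁻¹).mul_continuousOn
    (ee_cont α hα).continuousOn
  refine h3.congr ?_
  intro s hs
  rw [uIoc_of_le ht.le] at hs
  have hne : t ^ (2 - 2 * α) ≠ 0 := (Real.rpow_pos_of_pos ht _).ne'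
  simp only
  rw [kernel_scale α t s ht hs.1.le hs.2]
  field_simp

lemma volterra (α : ℝ) (hα : 0 < α) (t : ℝ) (ht : 0 < t) :
    ∫ s in (0 : ℝ)..t, s ^ (α - 1) * (t - s) ^ (α - 1) * ee α s =
      t ^ (α - 1) * (1 - Real.Gamma α * ee α t) := by
  have hc := conv_mlS α hα α α hα hα (cc 0) dd (Gr_cc 0) Gr_dd (-(t ^ α))
  simp only [conv_dd, mlS_dd] at hc
  have hr := rec_zero α hα α hα (-(t ^ α))
  have hG := Real.Gamma_pos_of_pos hα
  have e1 : ∫ s in Ioo (0 : ℝ) 1, s ^ (α - 1) * (1 - s) ^ (α - 1) *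
      (mlS α (cc 0) α (-(t ^ α) * s ^ α) * (1 / Real.Gamma α)) =
      (1 / Real.Gamma α) * ∫ s in (0 : ℝ)..1,
        (fun u => (u / t) ^ (α - 1) * (1 - u / t) ^ (α - 1) * ee α u) (t * s) := by
    rw [intervalIntegral.integral_of_le zero_le_one, integral_Ioc_eq_integral_Ioo,
      ← integral_const_mul]
    refine setIntegral_congr_fun measurableSet_Ioo fun s hs => ?_
    simp only [ee]
    rw [Real.mul_rpow ht.le hs.1.le, mul_div_cancel_left₀ _ ht.ne']
    ring_nf
  rw [intervalIntegral.integral_comp_mul_left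
    (fun u => (u / t) ^ (α - 1) * (1 - u / t) ^ (α - 1) * ee α u) ht.ne', mul_zero, mul_one] at e1
  have e2 : ∫ u in (0 : ℝ)..t, (u / t) ^ (α - 1) * (1 - u / t) ^ (α - 1) * ee α u =
      t ^ (2 - 2 * α) * ∫ s in (0 : ℝ)..t, s ^ (α - 1) * (t - s) ^ (α - 1) * ee α s := by
    rw [← intervalIntegral.integral_const_mul]
    refine intervalIntegral.integral_congr fun s hs => ?_
    rw [uIcc_of_le ht.le] at hs
    rw [kernel_scale α t s ht hs.1 hs.2]
    ring
  rw [e2] at e1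
  rw [e1] at hc
  have hee : ee α t = mlS α (cc 0) α (-(t ^ α)) := rfl
  rw [← hee, ← hc] at hr
  rw [hr, smul_eq_mul]
  have e3 : t ^ (α - 1) * (t ^ α * (t⁻¹ * t ^ (2 - 2 * α))) = 1 := by
    rw [← Real.rpow_neg_one t, ← Real.rpow_add ht, ← Real.rpow_add ht, ← Real.rpow_add ht]
    ring_nf
    exact Real.rpow_zero t
  set I := ∫ s in (0 : ℝ)..t, s ^ (α - 1) * (t - s) ^ (α - 1) * ee α s
  have : t ^ (α - 1) * (1 - Real.Gamma α * (1 / Real.Gamma α +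
      -t ^ α * (1 / Real.Gamma α * (t⁻¹ * (t ^ (2 - 2 * α) * I))))) =
      (t ^ (α - 1) * (t ^ α * (t⁻¹ * t ^ (2 - 2 * α)))) * I := by
    field_simp
    ring
  rw [this, e3, one_mul]

lemma ee_nonneg (α : ℝ) (hα : 0 < α) (hα1 : α < 1) (T : ℝ) (hT : 0 ≤ T) : 0 ≤ ee α T := by
  by_contra hneg
  push Not at hneg
  have hcont := ee_cont α hα
  have hG := Real.Gamma_pos_of_pos hα
  set S : Set ℝ := Icc 0 T ∩ {t | ee α t ≤ 0} with hS
  have hScl : IsCompact S :=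
    isCompact_Icc.inter_right (isClosed_le hcont continuous_const)
  have hSne : S.Nonempty := ⟨T, ⟨hT, le_rfl⟩, hneg.le⟩
  obtain ⟨t0, ht0S, hmin⟩ := hScl.exists_isLeast hSne
  have ht0e : ee α t0 ≤ 0 := ht0S.2
  have ht0 : 0 < t0 := by
    rcases ht0S.1.1.lt_or_eq with h | h
    · exact h
    · rw [← h, ee_zero α hα] at ht0e
      have : 0 < 1 / Real.Gamma α := by positivity
      linarith
  have hpos : ∀ s, 0 ≤ s → s < t0 → 0 < ee α s := by
    intro s hs0 hs
    by_contra hcon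
    push Not at hcon
    have := hmin ⟨⟨hs0, hs.le.trans ht0S.1.2⟩, hcon⟩
    linarith
  -- main inequality
  have key : ∀ t1, 0 < t1 → t1 < t0 →
      Real.Gamma α * t0 ^ (α - 1) ≤ t1 ^ (α - 1) * ((t0 - t1) ^ α / α) := by
    intro t1 h1 h10
    obtain ⟨t, ht, hmax⟩ := isCompact_Icc.exists_isMaxOn (nonempty_Icc.mpr h10.le)
      hcont.continuousOn
    have het : 0 < ee α t :=
      lt_of_lt_of_le (hpos t1 h1.le h10) (hmax ⟨le_rfl, h10.le⟩)
    have htlt : t < t0 := by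
      rcases ht.2.lt_or_eq with h | h
      · exact h
      · rw [h] at het; linarith
    have htp : 0 < t := lt_of_lt_of_le h1 ht.1
    have hI0 := kernel_int α hα t0 ht0
    have hI0a : IntervalIntegrable (fun s => s ^ (α - 1) * (t0 - s) ^ (α - 1) * ee α s)
        volume 0 t := hI0.mono_set (by
          rw [uIcc_of_le htp.le, uIcc_of_le ht0.le]; exact Icc_subset_Icc_right htlt.le)
    have hI0b : IntervalIntegrable (fun s => s ^ (α - 1) * (t0 - s) ^ (α - 1) * ee α s)
        volume t t0 := hI0.mono_set (by
          rw [uIcc_of_le htlt.le, uIcc_of_le ht0.le]; exact Icc_subset_Icc_left htp.le)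
    have hsplit := intervalIntegral.integral_add_adjacent_intervals hI0a hI0b
    have hV0 := volterra α hα t0 ht0
    have hVt := volterra α hα t htp
    have hA : ∫ s in (0 : ℝ)..t, s ^ (α - 1) * (t0 - s) ^ (α - 1) * ee α s ≤
        (t0 / t) ^ (α - 1) * ∫ s in (0 : ℝ)..t, s ^ (α - 1) * (t - s) ^ (α - 1) * ee α s := by
      rw [← intervalIntegral.integral_const_mul]
      refine intervalIntegral.integral_mono_on_of_le_Ioo htp.le hI0a
        ((kernel_int α hα t htp).const_mul _) ?_
      intro s hs
      have hs0 := hs.1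
      have hst : 0 < t - s := by linarith [hs.2]
      have hes := hpos s hs.1.le (hs.2.trans htlt)
      have h : (t0 - s) ^ (α - 1) ≤ (t0 / t) ^ (α - 1) * (t - s) ^ (α - 1) := by
        rw [← Real.mul_rpow (by positivity) hst.le]
        refine Real.rpow_le_rpow_of_nonpos (by positivity) ?_ (by linarith)
        rw [div_mul_eq_mul_div, div_le_iff₀ htp]
        nlinarith
      calc s ^ (α - 1) * (t0 - s) ^ (α - 1) * ee α s
          ≤ s ^ (α - 1) * ((t0 / t) ^ (α - 1) * (t - s) ^ (α - 1)) * ee α s := by gcongr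
        _ = _ := by ring
    have hkint : IntervalIntegrable (fun s => (t0 - s) ^ (α - 1)) volume t t0 := by
      have h := (intervalIntegral.intervalIntegrable_rpow' (a := t0 - t) (b := 0) (r := α - 1)
        (by linarith)).comp_sub_left t0
      simpa using h
    have hkval : ∫ s in t..t0, (t0 - s) ^ (α - 1) = (t0 - t) ^ α / α := by
      rw [intervalIntegral.integral_comp_sub_left (fun x => x ^ (α - 1)) t0,
        integral_rpow (Or.inl (by linarith))]
      simp [Real.zero_rpow hα.ne']
    have hB : ∫ s in t..t0, s ^ (α - 1) * (t0 - s) ^ (α - 1) * ee α s ≤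
        (t1 ^ (α - 1) * ee α t) * ((t0 - t) ^ α / α) := by
      rw [← hkval, ← intervalIntegral.integral_const_mul]
      refine intervalIntegral.integral_mono_on_of_le_Ioo htlt.le hI0b (hkint.const_mul _) ?_
      intro s hs
      have hs0 : 0 < s := htp.trans hs.1
      have hst : 0 < t0 - s := by linarith [hs.2]
      have hes := hpos s hs0.le hs.2
      have l1 : s ^ (α - 1) ≤ t1 ^ (α - 1) :=
        Real.rpow_le_rpow_of_nonpos h1 (ht.1.trans hs.1.le) (by linarith)
      have l2 : ee α s ≤ ee α t := hmax ⟨ht.1.trans hs.1.le, hs.2.le⟩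
      calc s ^ (α - 1) * (t0 - s) ^ (α - 1) * ee α s
          ≤ t1 ^ (α - 1) * (t0 - s) ^ (α - 1) * ee α t := by gcongr
        _ = _ := by ring
    have hC : (t0 - t) ^ α ≤ (t0 - t1) ^ α :=
      Real.rpow_le_rpow (by linarith) (by linarith [ht.1]) hα.le
    have e4 : (t0 / t) ^ (α - 1) * t ^ (α - 1) = t0 ^ (α - 1) := by
      rw [← Real.mul_rpow (by positivity) htp.le, div_mul_cancel₀ _ htp.ne']
    rw [hVt, ← mul_assoc, e4] at hA
    have hp0 : 0 < t0 ^ (α - 1) := Real.rpow_pos_of_pos ht0 _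
    have hp1 : 0 < t1 ^ (α - 1) := Real.rpow_pos_of_pos h1 _
    have h5 : t0 ^ (α - 1) ≤ t0 ^ (α - 1) * (1 - Real.Gamma α * ee α t0) := by
      have : Real.Gamma α * ee α t0 ≤ 0 := mul_nonpos_of_nonneg_of_nonpos hG.le ht0e
      nlinarith
    have hD : (t1 ^ (α - 1) * ee α t) * ((t0 - t) ^ α / α) ≤
        (t1 ^ (α - 1) * ee α t) * ((t0 - t1) ^ α / α) := by gcongr
    have h6 : Real.Gamma α * t0 ^ (α - 1) * ee α t ≤
        t1 ^ (α - 1) * ((t0 - t1) ^ α / α) * ee α t := by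
      linarith
    exact le_of_mul_le_mul_right h6 het
  have hct : ContinuousAt (fun t1 : ℝ => t1 ^ (α - 1) * ((t0 - t1) ^ α / α)) t0 := by
    refine ContinuousAt.mul (Real.continuousAt_rpow_const _ _ (Or.inl ht0.ne')) ?_
    refine ContinuousAt.div_const ?_ _
    exact ((Real.continuous_rpow_const hα.le).comp (continuous_const.sub continuous_id)).continuousAt
  have hlim : Tendsto (fun t1 : ℝ => t1 ^ (α - 1) * ((t0 - t1) ^ α / α)) (nhdsWithin t0 (Iio t0))
      (nhds 0) := by
    have := hct.tendsto.mono_left (nhdsWithin_le_nhds (s := Iio t0))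
    simpa [Real.zero_rpow hα.ne'] using this
  have hev : ∀ᶠ t1 in nhdsWithin t0 (Iio t0),
      Real.Gamma α * t0 ^ (α - 1) ≤ t1 ^ (α - 1) * ((t0 - t1) ^ α / α) := by
    filter_upwards [Ioo_mem_nhdsLT ht0] with t1 h
    exact key t1 h.1 h.2
  have := ge_of_tendsto hlim hev
  have hp0 : 0 < t0 ^ (α - 1) := Real.rpow_pos_of_pos ht0 _
  have : 0 < Real.Gamma α * t0 ^ (α - 1) := by positivity
  linarith

lemma P_base_nonneg (α : ℝ) (hα : 0 < α) (hα1 : α < 1) (x : ℝ) (hx : 0 ≤ x) :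
    0 ≤ mlS α (cc 0) α (-x) := by
  have h := ee_nonneg α hα hα1 (x ^ α⁻¹) (by positivity)
  unfold ee at h
  rwa [← Real.rpow_mul hx, inv_mul_cancel₀ hα.ne', Real.rpow_one] at h

lemma P_nonneg (α : ℝ) (hα : 0 < α) (hα1 : α < 1) (m : ℕ) :
    ∀ (p : ℝ), (m + 1) * α ≤ p → ∀ (x : ℝ), 0 ≤ x → 0 ≤ mlS α (cc m) p (-x) := by
  induction m with
  | zero =>
    intro p hp x hx
    rcases (show α ≤ p by simpa using hp).lt_or_eq with h | h
    · have hc := conv_mlS α hα α (p - α) hα (by linarith) (cc 0) dd (Gr_cc 0) Gr_dd (-x)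
      simp only [conv_dd, mlS_dd, add_sub_cancel] at hc
      have e : (fun n => cc 0 n) = cc 0 := rfl
      rw [e] at hc
      rw [← hc]
      refine setIntegral_nonneg measurableSet_Ioo fun s hs => ?_
      have h0 : 0 < s := hs.1
      have h1 : 0 < 1 - s := by linarith [hs.2]
      have hG := Real.Gamma_pos_of_pos (show 0 < p - α by linarith)
      have := P_base_nonneg α hα hα1 (x * s ^ α) (by positivity)
      rw [neg_mul]
      positivity
    · rw [← h]; exact P_base_nonneg α hα hα1 x hx
  | succ m ih =>
    intro p hp x hx
    push_cast at hp
    have hp' : (m + 1) * α ≤ p - α := by linarith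
    have hpa : 0 < p - α := lt_of_lt_of_le (by positivity) hp'
    have hc := conv_mlS α hα α (p - α) hα hpa (cc 0) (cc m) (Gr_cc 0) (Gr_cc m) (-x)
    simp only [conv_cc, add_sub_cancel] at hc
    have e : (fun n => cc (m + 1) n) = cc (m + 1) := rfl
    rw [e] at hc
    rw [← hc]
    refine setIntegral_nonneg measurableSet_Ioo fun s hs => ?_
    have h0 : 0 < s := hs.1
    have h1 : 0 < 1 - s := by linarith [hs.2]
    have a1 := P_base_nonneg α hα hα1 (x * s ^ α) (by positivity)
    have a2 := ih (p - α) hp' (x * (1 - s) ^ α) (by positivity)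
    rw [neg_mul, neg_mul]
    positivity

lemma bound_base (α : ℝ) (hα : 0 < α) (hα1 : α < 1) (m : ℕ) :
    ∀ (p : ℝ), (m + 2) * α ≤ p → ∃ C : ℝ, 0 ≤ C ∧ ∀ (x : ℝ), 0 ≤ x →
      |x ^ m * mlS α (cc m) p (-x)| ≤ C / (1 + x) := by
  induction m with
  | zero =>
    intro p hp
    have hp' : α ≤ p - α := by simp at hp; linarith
    have hpp : 0 < p := by linarith
    have hpa : 0 < p - α := by linarith
    have hG1 := Real.Gamma_pos_of_pos hpp
    have hG2 := Real.Gamma_pos_of_pos hpa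
    refine ⟨1 / Real.Gamma p + 1 / Real.Gamma (p - α), by positivity, fun x hx => ?_⟩
    have n1 := P_nonneg α hα hα1 0 p (by simp; linarith) x hx
    have n2 := P_nonneg α hα hα1 0 (p + α) (by simp; linarith) x hx
    have n3 := P_nonneg α hα hα1 0 (p - α) (by simp; linarith) x hx
    have r1 := rec_zero α hα p hpp (-x)
    have r2 := rec_zero α hα (p - α) hpa (-x)
    rw [sub_add_cancel] at r2
    rw [pow_zero, one_mul, abs_of_nonneg n1, le_div_iff₀ (by linarith)]
    have := mul_nonneg hx n2
    linarith
  | succ m ih =>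
    intro p hp
    push_cast at hp
    have hp' : (m + 2) * α ≤ p - α := by linarith
    have hpa : 0 < p - α := lt_of_lt_of_le (by positivity) hp'
    obtain ⟨C, hC, h⟩ := ih (p - α) hp'
    refine ⟨C, hC, fun x hx => le_trans ?_ (h x hx)⟩
    have n1 := P_nonneg α hα hα1 (m + 1) p (by push_cast; linarith) x hx
    have n2 := P_nonneg α hα hα1 (m + 1) (p - α) (by push_cast; linarith) x hx
    have r := rec_succ α hα (p - α) hpa m (-x)
    rw [sub_add_cancel] at r
    have n3 : 0 ≤ mlS α (cc m) (p - α) (-x) := by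
      have := mul_nonneg hx n1
      linarith
    rw [abs_of_nonneg (by positivity), abs_of_nonneg (by positivity), pow_succ, mul_assoc]
    gcongr
    linarith

lemma bound_all (α : ℝ) (hα : 0 < α) (hα1 : α < 1) (N : ℕ) :
    ∀ (m : ℕ) (p : ℝ), 0 < p → (m + 2) * α ≤ p + N → ∃ C : ℝ, 0 ≤ C ∧ ∀ (x : ℝ), 0 ≤ x →
      |x ^ m * mlS α (cc m) p (-x)| ≤ C / (1 + x) := by
  induction N with
  | zero =>
    intro m p _ hp
    exact bound_base α hα hα1 m p (by simpa using hp)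
  | succ N ih =>
    intro m p hp0 hp
    push_cast at hp
    obtain ⟨C1, hC1, h1⟩ := ih m (p + 1) (by linarith) (by linarith)
    obtain ⟨C2, hC2, h2⟩ := ih (m + 1) (p + 1 + α) (by linarith) (by push_cast; linarith)
    refine ⟨p * C1 + α * (m + 1) * C2, by positivity, fun x hx => ?_⟩
    have r := rec_desc α hα p hp0 m (-x)
    have e : x ^ m * mlS α (cc m) p (-x) = p * (x ^ m * mlS α (cc m) (p + 1) (-x)) -
        α * (m + 1) * (x ^ (m + 1) * mlS α (cc (m + 1)) (p + 1 + α) (-x)) := by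
      rw [r]; ring
    rw [e]
    refine (abs_sub _ _).trans ?_
    rw [abs_mul p, abs_mul (α * (m + 1)), abs_of_pos hp0,
      abs_of_pos (show 0 < α * ((m : ℝ) + 1) by positivity), add_div, mul_div_assoc, mul_div_assoc]
    have := h1 x hx
    have := h2 x hx
    gcongr

/-- for `0<α<1` and `β>0` there is `M > 0` such that
`|E_{α,β}(−x)| ≤ M/(1+x)` for all `x ≥ 0`. -/
theorem mittagLeffler_two_param_bound (α β : ℝ) (hα : 0 < α) (hα1 : α < 1) (hβ : 0 < β) :
    ∃ M : ℝ, 0 < M ∧ ∀ x : ℝ, 0 ≤ x → |ml α β (-x)| ≤ M / (1 + x) := by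
  obtain ⟨C, hC, h⟩ := bound_all α hα hα1 2 0 β hβ (by push_cast; linarith)
  refine ⟨C + 1, by linarith, fun x hx => ?_⟩
  have e : ml α β (-x) = mlS α (cc 0) β (-x) := by
    unfold ml mlS; simp [cc]
  have := h x hx
  rw [pow_zero, one_mul] at this
  rw [e]
  refine this.trans ?_
  gcongr
  linarith
end
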